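/- arXiv:2506.22421 — 4 statements merged into one kernel-verified Lean document; each statement's English description precedes it below -/
import Mathlib

section
/- Let p ≥ 1 and let μ, ν be Borel probability measures on ℝ^{dT} with ∫ |x|_p^p dμ < ∞ and ∫ |x|_p^p dν < ∞. Then AW_p(μ, ν)^p ≤ 2^p · ATV_p(μ, ν)^p. If moreover c_2, …, c_T ≥ 0 are constants such that for every t = 2, …, T and ν_{1:t−1}-almost every x_{1:t−1}, ∫ |x̃_t|_p^p ν_{x_{1:t−1}}(dx̃_t) ≤ c_t · (1 + |x_{1:t−1}|_p^p), then AW_p(μ, ν)^p ≤ 2^p (1 + 2 Σ_{t=1}^{T−1} ∏_{s=t+1}^{T} (1 + c_s)) · TV_p(μ, ν)^p. -/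
open MeasureTheory ProbabilityTheory
open scoped ENNReal

noncomputable section

/-- The path space `ℝ^{dT}`: `T` time steps with state space `ℝ^d`. -/
abbrev Traj (d T : ℕ) : Type := Fin T → Fin d → ℝ

/-- Restriction of a path to its first `t` coordinates. -/
def restr (d : ℕ) {t T : ℕ} (h : t ≤ T) (x : Traj d T) : Traj d t :=
  fun i => x (Fin.castLE h i)

lemma measurable_restr (d : ℕ) {t T : ℕ} (h : t ≤ T) : Measurable (restr d h) :=
  measurable_pi_lambda _ (fun i => measurable_pi_apply _)

/-- σ-algebra generated by the first `t` coordinates of the first component. -/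
def sigmaX (d T : ℕ) {t : ℕ} (h : t ≤ T) : MeasurableSpace (Traj d T × Traj d T) :=
  MeasurableSpace.comap (fun ω => restr d h ω.1) inferInstance

/-- σ-algebra generated by the first `t` coordinates of the second component. -/
def sigmaY (d T : ℕ) {t : ℕ} (h : t ≤ T) : MeasurableSpace (Traj d T × Traj d T) :=
  MeasurableSpace.comap (fun ω => restr d h ω.2) inferInstance

lemma sigmaX_le (d T : ℕ) {t : ℕ} (h : t ≤ T) :
    sigmaX d T h ≤ (inferInstance : MeasurableSpace (Traj d T × Traj d T)) :=
  ((measurable_restr d h).comp measurable_fst).comap_le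

lemma sigmaY_le (d T : ℕ) {t : ℕ} (h : t ≤ T) :
    sigmaY d T h ≤ (inferInstance : MeasurableSpace (Traj d T × Traj d T)) :=
  ((measurable_restr d h).comp measurable_snd).comap_le

/-- A coupling `π` of two laws on the path space is *bicausal* if for each `t < T`,
`σ(Y_1,…,Y_t)` is conditionally independent of `σ(X_1,…,X_T)` given `σ(X_1,…,X_t)`, and
symmetrically. -/
def IsBicausal (d T : ℕ) (π : Measure (Traj d T × Traj d T)) [IsFiniteMeasure π] : Prop :=
  ∀ t, 1 ≤ t → ∀ h : t + 1 ≤ T,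
    CondIndep (sigmaX d T (Nat.le_of_succ_le h)) (sigmaY d T (Nat.le_of_succ_le h))
      (sigmaX d T (le_refl T)) (sigmaX_le d T (Nat.le_of_succ_le h)) π ∧
    CondIndep (sigmaY d T (Nat.le_of_succ_le h)) (sigmaX d T (Nat.le_of_succ_le h))
      (sigmaY d T (le_refl T)) (sigmaY_le d T (Nat.le_of_succ_le h)) π

/-- The set of couplings of `μ` and `ν`. -/
def Cpl {α : Type*} [MeasurableSpace α] (μ ν : Measure α) : Set (Measure (α × α)) :=
  {π | IsProbabilityMeasure π ∧ π.map Prod.fst = μ ∧ π.map Prod.snd = ν}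

/-- The set of bicausal couplings of `μ` and `ν`. -/
def BCpl {d T : ℕ} (μ ν : Measure (Traj d T)) : Set (Measure (Traj d T × Traj d T)) :=
  {π | π ∈ Cpl μ ν ∧ ∃ _ : IsFiniteMeasure π, IsBicausal d T π}

/-- Weighted total variation distance. -/
def TVw {d T : ℕ} (w : Traj d T → ℝ) (μ ν : Measure (Traj d T)) : ℝ≥0∞ :=
  ⨅ π ∈ Cpl μ ν, ∫⁻ q in {q : Traj d T × Traj d T | q.1 ≠ q.2},
    (ENNReal.ofReal (w q.1) + ENNReal.ofReal (w q.2)) ∂π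

/-- Weighted adapted total variation distance. -/
def ATVw {d T : ℕ} (w : Traj d T → ℝ) (μ ν : Measure (Traj d T)) : ℝ≥0∞ :=
  ⨅ π ∈ BCpl μ ν, ∫⁻ q in {q : Traj d T × Traj d T | q.1 ≠ q.2},
    (ENNReal.ofReal (w q.1) + ENNReal.ofReal (w q.2)) ∂π

/-- `p`-th power of the adapted Wasserstein distance (cost `|x-y|_p^p`). -/
def AWpow (p : ℝ) {d T : ℕ} (μ ν : Measure (Traj d T)) : ℝ≥0∞ :=
  ⨅ π ∈ BCpl μ ν, ∫⁻ q, ENNReal.ofReal (∑ i, ∑ j, |q.1 i j - q.2 i j| ^ p) ∂π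

/-- The weight `w_p(x) = 1 + |x|_p^p`. -/
def wp (p : ℝ) {d T : ℕ} (x : Traj d T) : ℝ := 1 + ∑ i, ∑ j, |x i j| ^ p

/-- Two Markov kernels with the same source have a maximal coupling: off the diagonal the second
coordinate only charges the positive part of `η x - κ x`, which is carried by the slice of `D`. -/
lemma exists_maximal_coupling {α E : Type*} [MeasurableSpace α] [MeasurableSpace E]
    [MeasurableSpace.CountableOrCountablyGenerated α E] [MeasurableEq E]
    (κ η : Kernel α E) [IsMarkovKernel κ] [IsMarkovKernel η] :
    ∃ (K : Kernel α (E × E)) (D : Set (α × E)), IsMarkovKernel K ∧ MeasurableSet D ∧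
      (∀ x, (K x).map Prod.fst = κ x) ∧ (∀ x, (K x).map Prod.snd = η x) ∧
      ∀ x (φ : E → ℝ≥0∞), Measurable φ →
        ∫⁻ q in {q : E × E | q.1 ≠ q.2}, φ q.2 ∂K x + ∫⁻ u in {u | (x, u) ∈ D}, φ u ∂κ x
          ≤ ∫⁻ u in {u | (x, u) ∈ D}, φ u ∂η x := by
  set m := κ + η with hm
  set a : α → E → ℝ≥0∞ := fun x u => ENNReal.ofReal (Kernel.rnDerivAux κ m x u) with ha
  set b : α → E → ℝ≥0∞ := fun x u => ENNReal.ofReal (1 - Kernel.rnDerivAux κ m x u) with hb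
  have haux : Measurable fun q : α × E => Kernel.rnDerivAux κ m q.1 q.2 :=
    Kernel.measurable_rnDerivAux κ m
  have ham : Measurable (Function.uncurry a) := haux.ennreal_ofReal
  have hbm : Measurable (Function.uncurry b) := (haux.const_sub 1).ennreal_ofReal
  set c : α → E → ℝ≥0∞ := fun x u => min (a x u) (b x u) with hc
  have hcm : Measurable (Function.uncurry c) := ham.min hbm
  have hac : Measurable (Function.uncurry fun x u => a x u - c x u) := ham.sub hcm
  have hbc : Measurable (Function.uncurry fun x u => b x u - c x u) := hbm.sub hcm
  have hκ : m.withDensity a = κ := Kernel.withDensity_rnDerivAux κ η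
  have hη : m.withDensity b = η := Kernel.withDensity_one_sub_rnDerivAux κ η
  have hκx x : (m x).withDensity (a x) = κ x := by
    rw [← Kernel.withDensity_apply _ ham, hκ]
  have hηx x : (m x).withDensity (b x) = η x := by
    rw [← Kernel.withDensity_apply _ hbm, hη]
  set L := m.withDensity c
  set A := m.withDensity fun x u => a x u - c x u
  set B := m.withDensity fun x u => b x u - c x u
  have hLx x : L x = (m x).withDensity (c x) := Kernel.withDensity_apply _ hcm x
  have hAx x : A x = (m x).withDensity (fun u => a x u - c x u) := Kernel.withDensity_apply _ hac x
  have hBx x : B x = (m x).withDensity (fun u => b x u - c x u) := Kernel.withDensity_apply _ hbc x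
  have hLA x : L x + A x = κ x := by
    rw [hLx, hAx, ← withDensity_add_left hcm.of_uncurry_left, ← hκx]
    congr 1
    ext u
    exact add_tsub_cancel_of_le (min_le_left (a x u) (b x u))
  have hLB x : L x + B x = η x := by
    rw [hLx, hBx, ← withDensity_add_left hcm.of_uncurry_left, ← hηx]
    congr 1
    ext u
    exact add_tsub_cancel_of_le (min_le_right (a x u) (b x u))
  have hLA1 x : L x .univ + A x .univ = 1 := by
    rw [← Measure.add_apply, hLA, measure_univ]
  have hLB1 x : L x .univ + B x .univ = 1 := by
    rw [← Measure.add_apply, hLB, measure_univ]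
  have hLfin x : L x .univ ≠ ∞ := ne_top_of_le_ne_top ENNReal.one_ne_top (hLA1 x ▸ le_self_add)
  have hAfin x : A x .univ ≠ ∞ := ne_top_of_le_ne_top ENNReal.one_ne_top (hLA1 x ▸ le_add_self)
  have hAB x : A x .univ = B x .univ :=
    (ENNReal.add_right_inj (hLfin x)).1 ((hLA1 x).trans (hLB1 x).symm)
  have : IsFiniteKernel A := ⟨1, ENNReal.one_lt_top, fun x => hLA1 x ▸ le_add_self⟩
  have : IsFiniteKernel B := ⟨1, ENNReal.one_lt_top, fun x => hLB1 x ▸ le_add_self⟩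
  have hcancelA x : ((A x .univ)⁻¹ * B x .univ) • A x = A x := by
    rcases eq_or_ne (A x .univ) 0 with h | h
    · rw [Measure.measure_univ_eq_zero.1 h, smul_zero]
    · rw [← hAB, ENNReal.inv_mul_cancel h (hAfin x), one_smul]
  have hcancelB x : ((A x .univ)⁻¹ * A x .univ) • B x = B x := by
    rcases eq_or_ne (A x .univ) 0 with h | h
    · rw [Measure.measure_univ_eq_zero.1 ((hAB x).symm.trans h), smul_zero]
    · rw [ENNReal.inv_mul_cancel h (hAfin x), one_smul]
  have hdiag : Measurable fun u : E => (u, u) := measurable_id.prodMk measurable_id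
  let K : Kernel α (E × E) :=
    ⟨fun x => (L x).map (fun u => (u, u)) + (A x .univ)⁻¹ • (A x).prod (B x), by
      refine Measure.measurable_of_measurable_coe _ fun s hs => ?_
      simp only [Measure.coe_add, Measure.coe_smul, Pi.add_apply, Pi.smul_apply, smul_eq_mul]
      simp_rw [← Kernel.prod_apply, Measure.map_apply hdiag hs]
      exact (L.measurable_coe (hdiag hs)).add
        ((A.measurable_coe .univ).inv.mul ((A ×ₖ B).measurable_coe hs))⟩
  have hK x : K x = (L x).map (fun u => (u, u)) + (A x .univ)⁻¹ • (A x).prod (B x) := rfl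
  have hfst x : (K x).map Prod.fst = κ x := by
    rw [hK, Measure.map_add _ _ measurable_fst, Measure.map_map measurable_fst hdiag,
      Measure.map_smul, Measure.map_fst_prod, smul_smul, hcancelA, ← hLA]
    congr 1
    exact Measure.map_id
  have hsnd2 x : ((A x .univ)⁻¹ • (A x).prod (B x)).map Prod.snd = B x := by
    rw [Measure.map_smul, Measure.map_snd_prod, smul_smul, hcancelB]
  have hsnd x : (K x).map Prod.snd = η x := by
    rw [hK, Measure.map_add _ _ measurable_snd, Measure.map_map measurable_snd hdiag, hsnd2, ← hLB]
    congr 1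
    exact Measure.map_id
  have hD : MeasurableSet {q : α × E | a q.1 q.2 < b q.1 q.2} := measurableSet_lt ham hbm
  refine ⟨K, {q | a q.1 q.2 < b q.1 q.2}, ⟨fun x => ⟨?_⟩⟩, hD, hfst, hsnd, fun x φ hφ => ?_⟩
  · rw [← Set.preimage_univ (f := Prod.fst), ← Measure.map_apply measurable_fst .univ, hfst,
      measure_univ]
  · have hoff : MeasurableSet {q : E × E | q.1 ≠ q.2} := measurableSet_diagonal.compl
    have hDx : MeasurableSet {u | a x u < b x u} := measurable_prodMk_left hD
    have hle : ∫⁻ q in {q : E × E | q.1 ≠ q.2}, φ q.2 ∂K x ≤ ∫⁻ u, φ u ∂B x := by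
      rw [hK, Measure.restrict_add, lintegral_add_measure, Measure.restrict_map hdiag hoff]
      have : (fun u : E => (u, u)) ⁻¹' {q : E × E | q.1 ≠ q.2} = ∅ := by ext; simp
      rw [this, Measure.restrict_empty, Measure.map_zero, lintegral_zero_measure, zero_add]
      refine (setLIntegral_le_lintegral _ _).trans ?_
      conv_rhs => rw [← hsnd2 x]
      rw [lintegral_map hφ measurable_snd]
    refine (add_le_add_left hle _).trans ?_
    simp only [Set.mem_ofPred_eq]
    rw [hBx, ← hκx, ← hηx, restrict_withDensity hDx, restrict_withDensity hDx,
      lintegral_withDensity_eq_lintegral_mul _ hbc.of_uncurry_left hφ,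
      lintegral_withDensity_eq_lintegral_mul _ ham.of_uncurry_left hφ,
      lintegral_withDensity_eq_lintegral_mul _ hbm.of_uncurry_left hφ,
      ← lintegral_indicator hDx, ← lintegral_indicator hDx,
      ← lintegral_add_left (hbc.of_uncurry_left.mul hφ)]
    refine lintegral_mono fun u => ?_
    by_cases h : a x u < b x u
    · simp only [Pi.mul_apply, Set.indicator, Set.mem_ofPred_eq, h, if_true]
      rw [← add_mul, hc]
      simp only [min_eq_left h.le, tsub_add_cancel_of_le h.le, le_refl]
    · simp only [Pi.mul_apply, Set.indicator, Set.mem_ofPred_eq, h, if_false, add_zero]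
      simp [hc, min_eq_right (not_lt.1 h)]

/-- If the conditional law of `Z` given `(U, V)` only depends on `U`, then `V` and `Z` are
conditionally independent given `U`. -/
lemma condIndep_of_forall_exists_kernel {Ω E F G : Type*} [mΩ : MeasurableSpace Ω]
    [StandardBorelSpace Ω] [mE : MeasurableSpace E] [mF : MeasurableSpace F]
    [mG : MeasurableSpace G] (P : Measure Ω) [IsFiniteMeasure P] {U : Ω → E} {V : Ω → F} {Z : Ω → G}
    (hU : Measurable U) (hV : Measurable V) (hZ : Measurable Z)
    (h : ∀ B : Set G, MeasurableSet B → ∃ q : E → ℝ≥0∞, Measurable q ∧ (∀ x, q x ≤ 1) ∧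
      ∀ C : Set (E × F), MeasurableSet C →
        P ((fun ω => (U ω, V ω)) ⁻¹' C ∩ Z ⁻¹' B)
          = ∫⁻ ω in (fun ω => (U ω, V ω)) ⁻¹' C, q (U ω) ∂P) :
    CondIndep (mE.comap U) (mF.comap V) (mG.comap Z) hU.comap_le P := by
  rw [condIndep_iff _ _ _ hU.comap_le hV.comap_le hZ.comap_le]
  rintro _ _ ⟨A, hA, rfl⟩ ⟨B, hB, rfl⟩
  obtain ⟨q, hq, hq1, hqC⟩ := h B hB
  have hUV : Measurable fun ω => (U ω, V ω) := hU.prodMk hV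
  set Q : Ω → ℝ := fun ω => (q (U ω)).toReal with hQdef
  have hQU : StronglyMeasurable[mE.comap U] Q :=
    (hq.ennreal_toReal.comp (comap_measurable U)).stronglyMeasurable
  have hQm : Measurable Q := (hq.comp hU).ennreal_toReal
  have hQ1 ω : ‖Q ω‖ ≤ 1 := by
    rw [Real.norm_of_nonneg ENNReal.toReal_nonneg]
    exact ENNReal.toReal_le_of_le_ofReal zero_le_one (by simpa using hq1 _)
  have hQint : Integrable Q P := .of_bound hQm.aestronglyMeasurable 1 (.of_forall hQ1)
  have hset (C : Set (E × F)) (hC : MeasurableSet C) :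
      ∫ ω in (fun ω => (U ω, V ω)) ⁻¹' C, Q ω ∂P
        = P.real ((fun ω => (U ω, V ω)) ⁻¹' C ∩ Z ⁻¹' B) := by
    have hqU : Measurable fun ω => q (U ω) := hq.comp hU
    rw [hQdef, integral_toReal hqU.aemeasurable
      (.of_forall fun ω => (hq1 _).trans_lt ENNReal.one_lt_top), ← hqC C hC]
    rfl
  have hB' : MeasurableSet (Z ⁻¹' B) := hZ hB
  have hA' : MeasurableSet (V ⁻¹' A) := hV hA
  have hZQ : Q =ᵐ[P] P⟦Z ⁻¹' B | mE.comap U⟧ := by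
    refine ae_eq_condExp_of_forall_setIntegral_eq hU.comap_le
      ((integrable_const (1 : ℝ)).indicator hB') (fun _ _ _ => hQint.integrableOn) ?_
      hQU.aestronglyMeasurable
    rintro _ ⟨S, hS, rfl⟩ -
    have := hset (S ×ˢ .univ) (hS.prod .univ)
    have hpre : (fun ω => (U ω, V ω)) ⁻¹' (S ×ˢ .univ) = U ⁻¹' S := by ext; simp
    rw [hpre] at this
    rw [this, setIntegral_indicator hB', setIntegral_const, smul_eq_mul, mul_one]
  have hprod : P[(V ⁻¹' A).indicator (fun _ => (1 : ℝ)) * Q | mE.comap U]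
      =ᵐ[P] P⟦V ⁻¹' A ∩ Z ⁻¹' B | mE.comap U⟧ := by
    have hAQ : (V ⁻¹' A).indicator (fun _ => (1 : ℝ)) * Q = (V ⁻¹' A).indicator Q := by
      ext ω
      by_cases hω : ω ∈ V ⁻¹' A <;> simp [Set.indicator, hω]
    rw [hAQ]
    have hAQint : Integrable ((V ⁻¹' A).indicator Q) P := hQint.indicator hA'
    refine ae_eq_condExp_of_forall_setIntegral_eq hU.comap_le
      ((integrable_const (1 : ℝ)).indicator (hA'.inter hB'))
      (fun _ _ _ => integrable_condExp.integrableOn) ?_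
      stronglyMeasurable_condExp.aestronglyMeasurable
    rintro _ ⟨S, hS, rfl⟩ -
    have := hset (S ×ˢ A) (hS.prod hA)
    have hpre : (fun ω => (U ω, V ω)) ⁻¹' (S ×ˢ A) = U ⁻¹' S ∩ V ⁻¹' A := by ext; simp
    rw [hpre] at this
    rw [setIntegral_condExp hU.comap_le hAQint ⟨S, hS, rfl⟩, setIntegral_indicator hA', this,
      setIntegral_indicator (hA'.inter hB'), setIntegral_const, smul_eq_mul, mul_one,
      Set.inter_assoc]
  have hint : Integrable ((V ⁻¹' A).indicator (fun _ => (1 : ℝ))) P :=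
    (integrable_const (1 : ℝ)).indicator hA'
  have hpull := condExp_mul_of_stronglyMeasurable_right hQU
    (hint.mul_bdd hQm.aestronglyMeasurable (.of_forall hQ1)) hint
  filter_upwards [hprod, hpull, hZQ] with ω h1 h2 h3
  rw [← h1, h2, Pi.mul_apply, Pi.mul_apply, h3]

/-- Extension of a path by one further state. -/
def snocPath {d t : ℕ} (x : Traj d t) (u : Fin d → ℝ) : Traj d (t + 1) :=
  Fin.snoc (α := fun _ => Fin d → ℝ) x u

lemma measurable_snocPath (d t : ℕ) :
    Measurable fun q : Traj d t × (Fin d → ℝ) => snocPath q.1 q.2 := by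
  refine measurable_pi_lambda _ fun i => ?_
  refine Fin.lastCases ?_ (fun j => ?_) i
  · simpa [snocPath] using measurable_snd
  · simp only [snocPath, Fin.snoc_castSucc]
    exact (measurable_pi_apply j).comp measurable_fst

lemma measurable_snocPath_left {d t : ℕ} (x : Traj d t) : Measurable (snocPath x) :=
  (measurable_snocPath d t).comp measurable_prodMk_left

lemma restr_snocPath {d t T : ℕ} (h : t ≤ T) (x : Traj d T) (u : Fin d → ℝ) :
    restr d (h.trans (Nat.le_succ T)) (snocPath x u) = restr d h x := by
  ext i j
  change Fin.snoc (α := fun _ => Fin d → ℝ) x u (Fin.castSucc (Fin.castLE h i)) j = _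
  rw [Fin.snoc_castSucc]
  rfl

lemma snocPath_restr {d t T : ℕ} (h : t + 1 ≤ T) (x : Traj d T) :
    snocPath (restr d (Nat.le_of_succ_le h) x) (x ⟨t, h⟩) = restr d h x := by
  ext i j
  refine Fin.lastCases ?_ (fun k => ?_) i
  · simp only [snocPath, Fin.snoc_last]
    rfl
  · simp only [snocPath, Fin.snoc_castSucc]
    rfl

lemma snocPath_inj {d t : ℕ} {x y : Traj d t} {u v : Fin d → ℝ} :
    snocPath x u = snocPath y v ↔ x = y ∧ u = v :=
  Fin.snoc_injective2.eq_iff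

lemma restr_self {d T : ℕ} (x : Traj d T) : restr d le_rfl x = x := rfl

/-- `X` is adapted-Markov with transition kernels `κ` relative to the pair `(X, Y)`: given the past
of both processes, the next state of `X` is drawn from `κ` evaluated at the past of `X` only. -/
def IsCausalStep {Ω : Type*} [MeasurableSpace Ω] {d T : ℕ} (P : Measure Ω) (X Y : Ω → Traj d T)
    (κ : ∀ t, Kernel (Traj d t) (Fin d → ℝ)) : Prop :=
  ∀ s (h : s + 1 ≤ T) (F : Traj d (s + 1) → ℝ≥0∞) (G : Traj d s × Traj d s → ℝ≥0∞),
    Measurable F → Measurable G →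
    ∫⁻ ω, F (restr d h (X ω))
        * G (restr d (Nat.le_of_succ_le h) (X ω), restr d (Nat.le_of_succ_le h) (Y ω)) ∂P
      = ∫⁻ ω, (∫⁻ u, F (snocPath (restr d (Nat.le_of_succ_le h) (X ω)) u)
            ∂κ s (restr d (Nat.le_of_succ_le h) (X ω)))
        * G (restr d (Nat.le_of_succ_le h) (X ω), restr d (Nat.le_of_succ_le h) (Y ω)) ∂P

lemma IsCausalStep.exists_conditional {Ω : Type*} [MeasurableSpace Ω] {d T : ℕ} {P : Measure Ω}
    {X Y : Ω → Traj d T} {κ : ∀ t, Kernel (Traj d t) (Fin d → ℝ)} [∀ t, IsMarkovKernel (κ t)]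
    (hP : IsCausalStep P X Y κ) {t s : ℕ} (hts : t ≤ s) :
    ∀ (hs : s ≤ T) (F : Traj d s → ℝ≥0∞), Measurable F → (∀ x, F x ≤ 1) →
      ∃ q : Traj d t → ℝ≥0∞, Measurable q ∧ (∀ x, q x ≤ 1) ∧
        ∀ G : Traj d t × Traj d t → ℝ≥0∞, Measurable G →
          ∫⁻ ω, F (restr d hs (X ω))
              * G (restr d (hts.trans hs) (X ω), restr d (hts.trans hs) (Y ω)) ∂P
            = ∫⁻ ω, q (restr d (hts.trans hs) (X ω))
              * G (restr d (hts.trans hs) (X ω), restr d (hts.trans hs) (Y ω)) ∂P := by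
  induction s, hts using Nat.le_induction with
  | base => exact fun hs F hF hF1 => ⟨F, hF, hF1, fun G hG => rfl⟩
  | succ s hts ih =>
    intro hs F hF hF1
    have hF' : Measurable fun x : Traj d s => ∫⁻ u, F (snocPath x u) ∂κ s x :=
      (hF.comp (measurable_snocPath d s)).lintegral_kernel_prod_right'
    obtain ⟨q, hq, hq1, hqG⟩ := ih (Nat.le_of_succ_le hs) _ hF' fun x =>
      (lintegral_mono fun u => hF1 _).trans (by simp)
    refine ⟨q, hq, hq1, fun G hG => ?_⟩
    rw [← hqG G hG]
    exact hP s hs F (fun z => G (restr d hts z.1, restr d hts z.2)) hF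
      (hG.comp (((measurable_restr d hts).comp measurable_fst).prodMk
        ((measurable_restr d hts).comp measurable_snd)))

lemma IsCausalStep.condIndep {Ω : Type*} [MeasurableSpace Ω] [StandardBorelSpace Ω] {d T : ℕ}
    {P : Measure Ω} [IsFiniteMeasure P] {X Y : Ω → Traj d T} (hX : Measurable X)
    (hY : Measurable Y) {κ : ∀ t, Kernel (Traj d t) (Fin d → ℝ)} [∀ t, IsMarkovKernel (κ t)]
    (hP : IsCausalStep P X Y κ) {t : ℕ} (h : t ≤ T) :
    CondIndep (MeasurableSpace.comap (fun ω => restr d h (X ω)) inferInstance)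
      (MeasurableSpace.comap (fun ω => restr d h (Y ω)) inferInstance)
      (MeasurableSpace.comap (fun ω => restr d (le_refl T) (X ω)) inferInstance)
      ((measurable_restr d h).comp hX).comap_le P := by
  refine condIndep_of_forall_exists_kernel P ((measurable_restr d h).comp hX)
    ((measurable_restr d h).comp hY) ((measurable_restr d le_rfl).comp hX) fun B hB => ?_
  obtain ⟨q, hq, hq1, hqG⟩ := hP.exists_conditional h le_rfl (B.indicator 1)
    (measurable_one.indicator hB) (fun x => Set.indicator_le_self _ _ x)
  refine ⟨q, hq, hq1, fun C hC => ?_⟩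
  have hXY : Measurable fun ω => (restr d h (X ω), restr d h (Y ω)) :=
    ((measurable_restr d h).comp hX).prodMk ((measurable_restr d h).comp hY)
  have hB' : MeasurableSet ((fun ω => restr d le_rfl (X ω)) ⁻¹' B) :=
    ((measurable_restr d le_rfl).comp hX) hB
  have := hqG (C.indicator 1) (measurable_one.indicator hC)
  change P ((fun ω => (restr d h (X ω), restr d h (Y ω))) ⁻¹' C
      ∩ (fun ω => restr d le_rfl (X ω)) ⁻¹' B)
    = ∫⁻ ω in (fun ω => (restr d h (X ω), restr d h (Y ω))) ⁻¹' C, q (restr d h (X ω)) ∂P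
  rw [← lintegral_indicator (hXY hC), ← lintegral_indicator_one ((hXY hC).inter hB')]
  convert this using 2
  · ext ω
    simp only [Set.indicator, Set.mem_inter_iff, Set.mem_preimage, Pi.one_apply]
    split_ifs <;> simp_all
  · ext ω
    simp only [Set.indicator, Set.mem_preimage, Pi.one_apply]
    split_ifs <;> simp_all

/-- The kernels `κ` are the successive conditional laws of the path measure `μ`. -/
def IsDisintegration {d T : ℕ} (μ : Measure (Traj d T))
    (κ : ∀ t, Kernel (Traj d t) (Fin d → ℝ)) : Prop :=
  ∀ t (h : t + 1 ≤ T) (F : Traj d (t + 1) → ℝ≥0∞), Measurable F →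
    ∫⁻ x, F (restr d h x) ∂μ
      = ∫⁻ x, ∫⁻ u, F (snocPath (restr d (Nat.le_of_succ_le h) x) u)
          ∂κ t (restr d (Nat.le_of_succ_le h) x) ∂μ

lemma exists_isDisintegration {d T : ℕ} (μ : Measure (Traj d T)) [IsProbabilityMeasure μ] :
    ∃ κ : ∀ t, Kernel (Traj d t) (Fin d → ℝ), (∀ t, IsMarkovKernel (κ t)) ∧
      IsDisintegration μ κ := by
  have (t : ℕ) : ∃ κ : Kernel (Traj d t) (Fin d → ℝ), IsMarkovKernel κ ∧
      ∀ (h : t + 1 ≤ T) (F : Traj d (t + 1) → ℝ≥0∞), Measurable F →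
        ∫⁻ x, F (restr d h x) ∂μ
          = ∫⁻ x, ∫⁻ u, F (snocPath (restr d (Nat.le_of_succ_le h) x) u)
              ∂κ (restr d (Nat.le_of_succ_le h) x) ∂μ := by
    by_cases h : t + 1 ≤ T
    · have hm : Measurable fun x : Traj d T => (restr d (Nat.le_of_succ_le h) x, x ⟨t, h⟩) :=
        (measurable_restr d _).prodMk (measurable_pi_apply _)
      set ρ := μ.map fun x : Traj d T => (restr d (Nat.le_of_succ_le h) x, x ⟨t, h⟩) with hρ
      have : IsProbabilityMeasure ρ := Measure.isProbabilityMeasure_map hm.aemeasurable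
      refine ⟨ρ.condKernel, inferInstance, fun _ F hF => ?_⟩
      have hF' : Measurable fun q : Traj d t × (Fin d → ℝ) => F (snocPath q.1 q.2) :=
        hF.comp (measurable_snocPath d t)
      have hfst : ρ.fst = μ.map (restr d (Nat.le_of_succ_le h)) := by
        rw [Measure.fst, hρ, Measure.map_map measurable_fst hm]
        rfl
      calc ∫⁻ x, F (restr d h x) ∂μ
          = ∫⁻ q, F (snocPath q.1 q.2) ∂ρ := by
            rw [hρ, lintegral_map hF' hm]
            simp_rw [snocPath_restr]
        _ = ∫⁻ y, ∫⁻ u, F (snocPath y u) ∂ρ.condKernel y ∂ρ.fst := by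
            conv_lhs => rw [← ρ.disintegrate ρ.condKernel]
            rw [Measure.lintegral_compProd hF']
        _ = _ := by
            rw [hfst, lintegral_map hF'.lintegral_kernel_prod_right' (measurable_restr d _)]
    · exact ⟨Kernel.const _ (Measure.dirac 0), inferInstance, fun h' => absurd h' h⟩
  choose κ hκ using this
  exact ⟨κ, fun t => (hκ t).1, fun t => (hκ t).2⟩

/-- Path coupling obtained by successively sampling the next pair of states from `K`. -/
def pathCoupling {d : ℕ}
    (K : ∀ t, Kernel (Traj d t × Traj d t) ((Fin d → ℝ) × (Fin d → ℝ))) :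
    ∀ t, Measure (Traj d t × Traj d t)
  | 0 => Measure.dirac 0
  | t + 1 => (pathCoupling K t ⊗ₘ K t).map
      fun q => (snocPath q.1.1 q.2.1, snocPath q.1.2 q.2.2)

section PathCoupling

variable {d : ℕ} {K : ∀ t, Kernel (Traj d t × Traj d t) ((Fin d → ℝ) × (Fin d → ℝ))}

lemma measurable_snocPath_prod (d t : ℕ) :
    Measurable fun q : (Traj d t × Traj d t) × ((Fin d → ℝ) × (Fin d → ℝ)) =>
      (snocPath q.1.1 q.2.1, snocPath q.1.2 q.2.2) :=
  ((measurable_snocPath d t).comp (measurable_fst.fst.prodMk measurable_snd.fst)).prodMk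
    ((measurable_snocPath d t).comp (measurable_fst.snd.prodMk measurable_snd.snd))

variable [∀ t, IsMarkovKernel (K t)]

instance isProbabilityMeasure_pathCoupling (t : ℕ) : IsProbabilityMeasure (pathCoupling K t) := by
  induction t with
  | zero => exact Measure.dirac.isProbabilityMeasure
  | succ t ih => exact Measure.isProbabilityMeasure_map (measurable_snocPath_prod d t).aemeasurable

lemma lintegral_pathCoupling_succ (t : ℕ) {F : Traj d (t + 1) × Traj d (t + 1) → ℝ≥0∞}
    (hF : Measurable F) :
    ∫⁻ z, F z ∂pathCoupling K (t + 1)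
      = ∫⁻ z, ∫⁻ q, F (snocPath z.1 q.1, snocPath z.2 q.2) ∂K t z ∂pathCoupling K t := by
  rw [pathCoupling, lintegral_map hF (measurable_snocPath_prod d t)]
  exact Measure.lintegral_compProd (hF.comp (measurable_snocPath_prod d t))

lemma lintegral_pathCoupling_restr {t T : ℕ} (h : t ≤ T) {F : Traj d t × Traj d t → ℝ≥0∞}
    (hF : Measurable F) :
    ∫⁻ z, F (restr d h z.1, restr d h z.2) ∂pathCoupling K T = ∫⁻ z, F z ∂pathCoupling K t := by
  induction T, h using Nat.le_induction with
  | base => rfl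
  | succ T h ih =>
    have hF' : Measurable fun z : Traj d (T + 1) × Traj d (T + 1) =>
        F (restr d (h.trans (Nat.le_succ T)) z.1, restr d (h.trans (Nat.le_succ T)) z.2) :=
      hF.comp (((measurable_restr d _).comp measurable_fst).prodMk
        ((measurable_restr d _).comp measurable_snd))
    rw [← ih, lintegral_pathCoupling_succ T hF']
    simp_rw [restr_snocPath h, lintegral_const, measure_univ, mul_one]

variable {T : ℕ} {μ ν : Measure (Traj d T)} {κ η : ∀ t, Kernel (Traj d t) (Fin d → ℝ)}
  [IsProbabilityMeasure μ] [IsProbabilityMeasure ν]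

lemma lintegral_fst_pathCoupling [∀ t, IsMarkovKernel (κ t)] (hμ : IsDisintegration μ κ)
    (hK : ∀ t z, (K t z).map Prod.fst = κ t z.1) (t : ℕ) :
    ∀ (h : t ≤ T) (F : Traj d t → ℝ≥0∞), Measurable F →
      ∫⁻ z, F z.1 ∂pathCoupling K t = ∫⁻ x, F (restr d h x) ∂μ := by
  induction t with
  | zero =>
    intro h F hF
    have hF0 (x : Traj d 0) : F x = F 0 := congrArg F (Subsingleton.elim _ _)
    simp [hF0]
  | succ t ih =>
    intro h F hF
    have hsucc := lintegral_pathCoupling_succ (K := K) t (hF.comp measurable_fst)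
    simp only [Function.comp] at hsucc
    rw [hsucc, hμ t h F hF,
      ← ih (Nat.le_of_succ_le h) (fun x => ∫⁻ u, F (snocPath x u) ∂κ t x)
        (hF.comp (measurable_snocPath d t)).lintegral_kernel_prod_right']
    refine lintegral_congr fun z => ?_
    rw [← hK]
    exact (lintegral_map (hF.comp (measurable_snocPath_left z.1)) measurable_fst).symm

lemma lintegral_snd_pathCoupling [∀ t, IsMarkovKernel (η t)] (hν : IsDisintegration ν η)
    (hK : ∀ t z, (K t z).map Prod.snd = η t z.2) (t : ℕ) :
    ∀ (h : t ≤ T) (F : Traj d t → ℝ≥0∞), Measurable F →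
      ∫⁻ z, F z.2 ∂pathCoupling K t = ∫⁻ x, F (restr d h x) ∂ν := by
  induction t with
  | zero =>
    intro h F hF
    have hF0 (x : Traj d 0) : F x = F 0 := congrArg F (Subsingleton.elim _ _)
    simp [hF0]
  | succ t ih =>
    intro h F hF
    have hsucc := lintegral_pathCoupling_succ (K := K) t (hF.comp measurable_snd)
    simp only [Function.comp] at hsucc
    rw [hsucc, hν t h F hF,
      ← ih (Nat.le_of_succ_le h) (fun x => ∫⁻ u, F (snocPath x u) ∂η t x)
        (hF.comp (measurable_snocPath d t)).lintegral_kernel_prod_right']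
    refine lintegral_congr fun z => ?_
    rw [← hK]
    exact (lintegral_map (hF.comp (measurable_snocPath_left z.2)) measurable_snd).symm

lemma isCausalStep_fst_pathCoupling [∀ t, IsMarkovKernel (κ t)]
    (hK : ∀ t z, (K t z).map Prod.fst = κ t z.1) :
    IsCausalStep (pathCoupling K T) Prod.fst Prod.snd κ := by
  intro s h F G hF hG
  have hF' : Measurable fun x : Traj d s => ∫⁻ u, F (snocPath x u) ∂κ s x :=
    (hF.comp (measurable_snocPath d s)).lintegral_kernel_prod_right'
  have hG' : Measurable fun z : Traj d (s + 1) × Traj d (s + 1) =>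
      G (restr d (Nat.le_succ s) z.1, restr d (Nat.le_succ s) z.2) :=
    hG.comp (((measurable_restr d _).comp measurable_fst).prodMk
      ((measurable_restr d _).comp measurable_snd))
  have hFG : Measurable fun z : Traj d (s + 1) × Traj d (s + 1) =>
      F z.1 * G (restr d (Nat.le_succ s) z.1, restr d (Nat.le_succ s) z.2) :=
    (hF.comp measurable_fst).mul hG'
  have hr := lintegral_pathCoupling_restr (K := K) (Nat.le_of_succ_le h)
    ((hF'.comp measurable_fst).mul hG)
  refine (lintegral_pathCoupling_restr (K := K) h hFG).trans (Eq.trans ?_ hr.symm)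
  rw [lintegral_pathCoupling_succ s hFG]
  refine lintegral_congr fun z => ?_
  have hFz : Measurable fun u => F (snocPath z.1 u) := hF.comp (measurable_snocPath_left z.1)
  have hFz' : Measurable fun q : (Fin d → ℝ) × (Fin d → ℝ) => F (snocPath z.1 q.1) :=
    hFz.comp measurable_fst
  simp only [Pi.mul_apply, Function.comp]
  simp_rw [restr_snocPath le_rfl, restr_self, Prod.mk.eta]
  rw [lintegral_mul_const _ hFz', ← hK, lintegral_map hFz measurable_fst]

lemma isCausalStep_snd_pathCoupling [∀ t, IsMarkovKernel (η t)]
    (hK : ∀ t z, (K t z).map Prod.snd = η t z.2) :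
    IsCausalStep (pathCoupling K T) Prod.snd Prod.fst η := by
  intro s h F G hF hG
  have hF' : Measurable fun x : Traj d s => ∫⁻ u, F (snocPath x u) ∂η s x :=
    (hF.comp (measurable_snocPath d s)).lintegral_kernel_prod_right'
  have hG' : Measurable fun z : Traj d (s + 1) × Traj d (s + 1) =>
      G (restr d (Nat.le_succ s) z.2, restr d (Nat.le_succ s) z.1) :=
    hG.comp (((measurable_restr d _).comp measurable_snd).prodMk
      ((measurable_restr d _).comp measurable_fst))
  have hFG : Measurable fun z : Traj d (s + 1) × Traj d (s + 1) =>
      F z.2 * G (restr d (Nat.le_succ s) z.2, restr d (Nat.le_succ s) z.1) :=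
    (hF.comp measurable_snd).mul hG'
  have hr := lintegral_pathCoupling_restr (K := K) (Nat.le_of_succ_le h)
    ((hF'.comp measurable_snd).mul (hG.comp measurable_swap))
  refine (lintegral_pathCoupling_restr (K := K) h hFG).trans (Eq.trans ?_ hr.symm)
  rw [lintegral_pathCoupling_succ s hFG]
  refine lintegral_congr fun z => ?_
  have hFz : Measurable fun u => F (snocPath z.2 u) := hF.comp (measurable_snocPath_left z.2)
  have hFz' : Measurable fun q : (Fin d → ℝ) × (Fin d → ℝ) => F (snocPath z.2 q.2) :=
    hFz.comp measurable_snd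
  simp only [Pi.mul_apply, Function.comp]
  simp_rw [restr_snocPath le_rfl, restr_self]
  rw [lintegral_mul_const _ hFz', ← hK, lintegral_map hFz measurable_snd]
  rfl

lemma pathCoupling_mem_BCpl [∀ t, IsMarkovKernel (κ t)] [∀ t, IsMarkovKernel (η t)]
    (hμ : IsDisintegration μ κ) (hν : IsDisintegration ν η)
    (hK₁ : ∀ t z, (K t z).map Prod.fst = κ t z.1) (hK₂ : ∀ t z, (K t z).map Prod.snd = η t z.2) :
    pathCoupling K T ∈ BCpl μ ν := by
  refine ⟨⟨inferInstance, ?_, ?_⟩, inferInstance, fun t _ h => ⟨?_, ?_⟩⟩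
  · refine Measure.ext_of_lintegral _ fun F hF => ?_
    rw [lintegral_map hF measurable_fst, lintegral_fst_pathCoupling hμ hK₁ T le_rfl F hF]
    rfl
  · refine Measure.ext_of_lintegral _ fun F hF => ?_
    rw [lintegral_map hF measurable_snd, lintegral_snd_pathCoupling hν hK₂ T le_rfl F hF]
    rfl
  · exact (isCausalStep_fst_pathCoupling hK₁).condIndep measurable_fst measurable_snd _
  · exact (isCausalStep_snd_pathCoupling hK₂).condIndep measurable_snd measurable_fst _

end PathCoupling

/-- A coupling kernel that uses a maximal coupling as long as the two pasts agree. -/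
lemma exists_coupling_kernel {α E : Type*} [MeasurableSpace α] [MeasurableSpace E]
    [MeasurableSpace.CountableOrCountablyGenerated α E] [MeasurableEq E] [MeasurableEq α]
    (κ η : Kernel α E) [IsMarkovKernel κ] [IsMarkovKernel η] :
    ∃ (K : Kernel (α × α) (E × E)) (D : Set (α × E)), IsMarkovKernel K ∧ MeasurableSet D ∧
      (∀ z, (K z).map Prod.fst = κ z.1) ∧ (∀ z, (K z).map Prod.snd = η z.2) ∧
      ∀ x (φ : E → ℝ≥0∞), Measurable φ →
        ∫⁻ q in {q : E × E | q.1 ≠ q.2}, φ q.2 ∂K (x, x) + ∫⁻ u in {u | (x, u) ∈ D}, φ u ∂κ x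
          ≤ ∫⁻ u in {u | (x, u) ∈ D}, φ u ∂η x := by
  classical
  obtain ⟨J, D, hJ, hD, hJ₁, hJ₂, hJD⟩ := exists_maximal_coupling κ η
  let I : Kernel (α × α) (E × E) :=
    (κ.comap Prod.fst measurable_fst) ×ₖ (η.comap Prod.snd measurable_snd)
  have hdiag : MeasurableSet {z : α × α | z.1 = z.2} := measurableSet_diagonal
  refine ⟨Kernel.piecewise hdiag
    (J.comap Prod.fst measurable_fst) I, D, inferInstance, hD, fun z => ?_, fun z => ?_, ?_⟩
  · rw [Kernel.piecewise_apply]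
    split_ifs with h
    · exact hJ₁ z.1
    · simp [I, Kernel.prod_apply, Measure.map_fst_prod]
  · rw [Kernel.piecewise_apply]
    split_ifs with h
    · rw [show z.2 = z.1 from (show z.1 = z.2 from h).symm]
      exact hJ₂ z.1
    · simp [I, Kernel.prod_apply, Measure.map_snd_prod]
  · intro x φ hφ
    rw [Kernel.piecewise_apply, if_pos (show (x, x) ∈ {z : α × α | z.1 = z.2} from rfl)]
    exact hJD x φ hφ

/-- One-step estimate for the weighted mass that the path coupling puts off the diagonal, in terms
of the off-diagonal masses of an arbitrary coupling `γ`. -/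
lemma lintegral_offDiag_pathCoupling_succ_le {d T : ℕ} {μ ν : Measure (Traj d T)}
    [IsProbabilityMeasure μ] [IsProbabilityMeasure ν]
    {κ η : ∀ t, Kernel (Traj d t) (Fin d → ℝ)} [∀ t, IsMarkovKernel (κ t)]
    [∀ t, IsMarkovKernel (η t)] (hμ : IsDisintegration μ κ) (hν : IsDisintegration ν η)
    {K : ∀ t, Kernel (Traj d t × Traj d t) ((Fin d → ℝ) × (Fin d → ℝ))}
    [∀ t, IsMarkovKernel (K t)] (hK₁ : ∀ t z, (K t z).map Prod.fst = κ t z.1)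
    (hK₂ : ∀ t z, (K t z).map Prod.snd = η t z.2)
    {D : ∀ t, Set (Traj d t × (Fin d → ℝ))} (hD : ∀ t, MeasurableSet (D t))
    (hKD : ∀ t x (φ : (Fin d → ℝ) → ℝ≥0∞), Measurable φ →
      ∫⁻ q in {q : (Fin d → ℝ) × (Fin d → ℝ) | q.1 ≠ q.2}, φ q.2 ∂K t (x, x)
          + ∫⁻ u in {u | (x, u) ∈ D t}, φ u ∂κ t x
        ≤ ∫⁻ u in {u | (x, u) ∈ D t}, φ u ∂η t x)
    {W : ∀ t, Traj d t → ℝ≥0∞} (hW : ∀ t, Measurable (W t))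
    {γ : Measure (Traj d T × Traj d T)} (hγ₁ : γ.map Prod.fst = μ) (hγ₂ : γ.map Prod.snd = ν)
    {t : ℕ} (h : t + 1 ≤ T) (hWμ : ∫⁻ x, W (t + 1) (restr d h x) ∂μ ≠ ∞) {C : ℝ≥0∞}
    (hC : ∀ x y : Traj d t, x ≠ y → ∫⁻ u, W (t + 1) (snocPath x u) ∂η t x ≤ C * W t x) :
    ∫⁻ z, {z : Traj d (t + 1) × Traj d (t + 1) | z.1 ≠ z.2}.indicator
        (fun z => W (t + 1) z.2) z ∂pathCoupling K (t + 1)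
      ≤ C * ∫⁻ z, {z : Traj d t × Traj d t | z.1 ≠ z.2}.indicator
            (fun z => W t z.2) z ∂pathCoupling K t
        + ∫⁻ q, {q : Traj d T × Traj d T | restr d h q.1 ≠ restr d h q.2}.indicator
            (fun q => W (t + 1) (restr d h q.2)) q ∂γ
        + C * ∫⁻ q, {q : Traj d T × Traj d T |
              restr d (Nat.le_of_succ_le h) q.1 ≠ restr d (Nat.le_of_succ_le h) q.2}.indicator
            (fun q => W t (restr d (Nat.le_of_succ_le h) q.1)) q ∂γ := by
  have h' : t ≤ T := Nat.le_of_succ_le h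
  have hoff (s : ℕ) : MeasurableSet {z : Traj d s × Traj d s | z.1 ≠ z.2} :=
    measurableSet_diagonal.compl
  have hoffr {s : ℕ} (hs : s ≤ T) :
      MeasurableSet {q : Traj d T × Traj d T | restr d hs q.1 ≠ restr d hs q.2} :=
    (((measurable_restr d hs).comp measurable_fst).prodMk
      ((measurable_restr d hs).comp measurable_snd)) (hoff s)
  -- the weight restricted to the region where the law of the next state under `η` dominates
  set Φ : Traj d (t + 1) → ℝ≥0∞ :=
    {y | (restr d (Nat.le_succ t) y, y (Fin.last t)) ∈ D t}.indicator (W (t + 1)) with hΦ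
  have hΦm : Measurable Φ := (hW _).indicator
    (((measurable_restr d _).prodMk (measurable_pi_apply _)) (hD t))
  have hΦW y : Φ y ≤ W (t + 1) y := Set.indicator_le_self _ _ y
  have hΦs (x : Traj d t) (u : Fin d → ℝ) :
      Φ (snocPath x u) = {u | (x, u) ∈ D t}.indicator (fun u => W (t + 1) (snocPath x u)) u := by
    have h1 : restr d (Nat.le_succ t) (snocPath x u) = x := restr_snocPath le_rfl x u
    have h2 : snocPath x u (Fin.last t) = u := by simp [snocPath]
    have hmem : snocPath x u ∈ {y | (restr d (Nat.le_succ t) y, y (Fin.last t)) ∈ D t} ↔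
        u ∈ {u | (x, u) ∈ D t} := by
      change (restr d _ (snocPath x u), snocPath x u (Fin.last t)) ∈ D t ↔ _
      rw [h1, h2]
      rfl
    by_cases hu : u ∈ {u | (x, u) ∈ D t}
    · rw [hΦ, Set.indicator_of_mem hu, Set.indicator_of_mem (hmem.2 hu)]
    · rw [hΦ, Set.indicator_of_notMem hu, Set.indicator_of_notMem (fun hn => hu (hmem.1 hn))]
  set a : Traj d t → ℝ≥0∞ := fun x => ∫⁻ u, Φ (snocPath x u) ∂κ t x with ha
  set b : Traj d t → ℝ≥0∞ := fun x => ∫⁻ u, Φ (snocPath x u) ∂η t x with hb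
  have ham : Measurable a := (hΦm.comp (measurable_snocPath d t)).lintegral_kernel_prod_right'
  have hbm : Measurable b := (hΦm.comp (measurable_snocPath d t)).lintegral_kernel_prod_right'
  have hab x : ∫⁻ q in {q : (Fin d → ℝ) × (Fin d → ℝ) | q.1 ≠ q.2},
      W (t + 1) (snocPath x q.2) ∂K t (x, x) + a x ≤ b x := by
    have hDx : MeasurableSet {u | (x, u) ∈ D t} := measurable_prodMk_left (hD t)
    have := hKD t x (fun u => W (t + 1) (snocPath x u))
      ((hW _).comp (measurable_snocPath_left x))
    rw [← lintegral_indicator hDx, ← lintegral_indicator hDx] at this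
    simpa only [ha, hb, hΦs] using this
  have hNm : Measurable fun z : Traj d (t + 1) × Traj d (t + 1) =>
      {z : Traj d (t + 1) × Traj d (t + 1) | z.1 ≠ z.2}.indicator (fun z => W (t + 1) z.2) z :=
    ((hW _).comp measurable_snd).indicator (hoff _)
  have hNm' : Measurable fun z : Traj d t × Traj d t =>
      {z : Traj d t × Traj d t | z.1 ≠ z.2}.indicator (fun z => W t z.2) z :=
    ((hW _).comp measurable_snd).indicator (hoff _)
  have hpoint (z : Traj d t × Traj d t) :
      ∫⁻ q, {z : Traj d (t + 1) × Traj d (t + 1) | z.1 ≠ z.2}.indicator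
          (fun z => W (t + 1) z.2) (snocPath z.1 q.1, snocPath z.2 q.2) ∂K t z + a z.1
        ≤ C * {z : Traj d t × Traj d t | z.1 ≠ z.2}.indicator (fun z => W t z.2) z + b z.1 := by
    obtain ⟨x, y⟩ := z
    rcases eq_or_ne x y with rfl | hxy
    · refine le_trans (add_le_add_left (le_of_eq ?_) _) ((hab x).trans le_add_self)
      have hoffE : MeasurableSet {q : (Fin d → ℝ) × (Fin d → ℝ) | q.1 ≠ q.2} :=
        measurableSet_diagonal.compl
      rw [← lintegral_indicator hoffE]
      refine lintegral_congr fun q => ?_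
      simp [Set.indicator, snocPath_inj]
    · refine add_le_add ?_ (le_add_self.trans (hab x))
      rw [Set.indicator_of_mem (show (x, y) ∈ {z : Traj d t × Traj d t | z.1 ≠ z.2} from hxy)]
      refine le_trans ?_ (hC y x hxy.symm)
      have hm : Measurable fun u => W (t + 1) (snocPath y u) :=
        (hW _).comp (measurable_snocPath_left y)
      rw [← hK₂ t (x, y), lintegral_map hm measurable_snd]
      exact lintegral_mono fun q => Set.indicator_le_self _ _ _
  have hγμ {F : Traj d T → ℝ≥0∞} (hF : Measurable F) : ∫⁻ x, F x ∂μ = ∫⁻ q, F q.1 ∂γ := by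
    rw [← hγ₁, lintegral_map hF measurable_fst]
  have hγν {F : Traj d T → ℝ≥0∞} (hF : Measurable F) : ∫⁻ x, F x ∂ν = ∫⁻ q, F q.2 ∂γ := by
    rw [← hγ₂, lintegral_map hF measurable_snd]
  have ha_int : ∫⁻ z, a z.1 ∂pathCoupling K t = ∫⁻ x, Φ (restr d h x) ∂μ := by
    rw [lintegral_fst_pathCoupling hμ hK₁ t h' a ham, hμ t h Φ hΦm]
  have hb_le : ∫⁻ z, b z.1 ∂pathCoupling K t ≤ ∫⁻ x, Φ (restr d h x) ∂ν
      + C * ∫⁻ q, {q : Traj d T × Traj d T | restr d h' q.1 ≠ restr d h' q.2}.indicator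
            (fun q => W t (restr d h' q.1)) q ∂γ := by
    have hb₁ : Measurable fun x : Traj d T => b (restr d h' x) := hbm.comp (measurable_restr d h')
    have hb₂ : Measurable fun q : Traj d T × Traj d T => b (restr d h' q.2) :=
      hb₁.comp measurable_snd
    have hWr : Measurable fun q : Traj d T × Traj d T =>
        {q : Traj d T × Traj d T | restr d h' q.1 ≠ restr d h' q.2}.indicator
          (fun q => W t (restr d h' q.1)) q :=
      ((hW _).comp ((measurable_restr d h').comp measurable_fst)).indicator (hoffr h')
    have hνb : ∫⁻ x, Φ (restr d h x) ∂ν = ∫⁻ x, b (restr d h' x) ∂ν := hν t h Φ hΦm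
    rw [lintegral_fst_pathCoupling hμ hK₁ t h' b hbm, hνb, hγμ hb₁, hγν hb₁,
      ← lintegral_const_mul _ hWr, ← lintegral_add_left hb₂]
    refine lintegral_mono fun q => ?_
    by_cases hq : restr d h' q.1 = restr d h' q.2
    · simp [hq]
    · rw [Set.indicator_of_mem (Set.mem_ofPred_eq ▸ hq)]
      refine le_trans ?_ le_add_self
      exact (lintegral_mono fun u => hΦW _).trans (hC _ _ hq)
  have hΦ_le : ∫⁻ x, Φ (restr d h x) ∂ν ≤ ∫⁻ x, Φ (restr d h x) ∂μ
      + ∫⁻ q, {q : Traj d T × Traj d T | restr d h q.1 ≠ restr d h q.2}.indicator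
            (fun q => W (t + 1) (restr d h q.2)) q ∂γ := by
    have hΦ₁ : Measurable fun x : Traj d T => Φ (restr d h x) := hΦm.comp (measurable_restr d h)
    have hΦ₂ : Measurable fun q : Traj d T × Traj d T => Φ (restr d h q.1) :=
      hΦ₁.comp measurable_fst
    rw [hγμ hΦ₁, hγν hΦ₁, ← lintegral_add_left hΦ₂]
    refine lintegral_mono fun q => ?_
    by_cases hq : restr d h q.1 = restr d h q.2
    · simp [hq]
    · rw [Set.indicator_of_mem (Set.mem_ofPred_eq ▸ hq)]
      exact (hΦW _).trans le_add_self
  have hfin : ∫⁻ x, Φ (restr d h x) ∂μ ≠ ∞ :=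
    ne_top_of_le_ne_top hWμ (lintegral_mono fun x => hΦW _)
  have hmain := lintegral_mono (μ := pathCoupling K t) hpoint
  have ham' : Measurable fun z : Traj d t × Traj d t => a z.1 := ham.comp measurable_fst
  have hbm' : Measurable fun z : Traj d t × Traj d t => b z.1 := hbm.comp measurable_fst
  rw [lintegral_add_right _ ham', lintegral_add_right _ hbm',
    ← lintegral_pathCoupling_succ t hNm, ha_int, lintegral_const_mul _ hNm'] at hmain
  rw [← ENNReal.add_le_add_iff_right hfin]
  refine hmain.trans ((add_le_add_right (hb_le.trans (add_le_add_left hΦ_le _)) _).trans_eq ?_)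
  ring

lemma sum_prod_Icc_succ {R : Type*} [CommSemiring R] (C : ℕ → R) {t : ℕ} (ht : 1 ≤ t) :
    ∑ r ∈ Finset.Icc 1 t, ∏ s ∈ Finset.Icc (r + 1) (t + 1), C s
      = C (t + 1) * (1 + ∑ r ∈ Finset.Icc 1 (t - 1), ∏ s ∈ Finset.Icc (r + 1) t, C s) := by
  obtain ⟨k, rfl⟩ := Nat.exists_eq_add_of_le' ht
  rw [Finset.sum_Icc_succ_top (by lia), Nat.add_sub_cancel, mul_add, Finset.mul_sum, mul_one,
    Finset.Icc_self, Finset.prod_singleton, add_comm]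
  congr 1
  refine Finset.sum_congr rfl fun r hr => ?_
  rw [Finset.prod_Icc_succ_top (by have := Finset.mem_Icc.1 hr; lia), mul_comm]

/-- Two couplings of the same pair of measures have the same difference of the weighted
off-diagonal masses of their two components. -/
lemma lintegral_offDiag_add_comm {α : Type*} [MeasurableSpace α] [MeasurableEq α]
    {μ ν : Measure α} {π γ : Measure (α × α)} (hπ : π ∈ Cpl μ ν) (hγ : γ ∈ Cpl μ ν)
    {w : α → ℝ≥0∞} (hw : Measurable w) (hwμ : ∫⁻ x, w x ∂μ ≠ ∞) :
    ∫⁻ q in {q : α × α | q.1 ≠ q.2}, w q.1 ∂π + ∫⁻ q in {q : α × α | q.1 ≠ q.2}, w q.2 ∂γ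
      = ∫⁻ q in {q : α × α | q.1 ≠ q.2}, w q.2 ∂π
        + ∫⁻ q in {q : α × α | q.1 ≠ q.2}, w q.1 ∂γ := by
  have hoff : MeasurableSet {q : α × α | q.1 ≠ q.2} := measurableSet_diagonal.compl
  have hfst {ρ : Measure (α × α)} (hρ : ρ ∈ Cpl μ ν) :
      ∫⁻ q in {q : α × α | q.1 ≠ q.2}, w q.1 ∂ρ + ∫⁻ q in {q : α × α | q.1 ≠ q.2}ᶜ, w q.1 ∂ρ
        = ∫⁻ x, w x ∂μ := by
    rw [lintegral_add_compl _ hoff, ← hρ.2.1, lintegral_map hw measurable_fst]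
  have hsnd {ρ : Measure (α × α)} (hρ : ρ ∈ Cpl μ ν) :
      ∫⁻ q in {q : α × α | q.1 ≠ q.2}, w q.2 ∂ρ + ∫⁻ q in {q : α × α | q.1 ≠ q.2}ᶜ, w q.1 ∂ρ
        = ∫⁻ x, w x ∂ν := by
    have heq : ∫⁻ q in {q : α × α | q.1 ≠ q.2}ᶜ, w q.1 ∂ρ
        = ∫⁻ q in {q : α × α | q.1 ≠ q.2}ᶜ, w q.2 ∂ρ :=
      setLIntegral_congr_fun hoff.compl fun q hq => by
        rw [show q.1 = q.2 from not_not.1 hq]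
    rw [heq, lintegral_add_compl _ hoff, ← hρ.2.2, lintegral_map hw measurable_snd]
  have hfin {ρ : Measure (α × α)} (hρ : ρ ∈ Cpl μ ν) :
      ∫⁻ q in {q : α × α | q.1 ≠ q.2}ᶜ, w q.1 ∂ρ ≠ ∞ :=
    ne_top_of_le_ne_top hwμ (le_add_self.trans_eq (hfst hρ))
  have h₁ := (hfst hπ).trans (hfst hγ).symm
  have h₂ := (hsnd hγ).trans (hsnd hπ).symm
  rw [← ENNReal.add_left_inj (ENNReal.add_ne_top.2 ⟨hfin hπ, hfin hγ⟩)]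
  calc _ = (∫⁻ q in {q : α × α | q.1 ≠ q.2}, w q.1 ∂π
          + ∫⁻ q in {q : α × α | q.1 ≠ q.2}ᶜ, w q.1 ∂π)
        + (∫⁻ q in {q : α × α | q.1 ≠ q.2}, w q.2 ∂γ
          + ∫⁻ q in {q : α × α | q.1 ≠ q.2}ᶜ, w q.1 ∂γ) := by ring
    _ = _ := by
      rw [h₁, h₂]
      ring

/-- There is a bicausal coupling whose weighted off-diagonal mass is controlled by that of every
coupling, provided the weight grows by bounded factors along the conditional laws of `ν`. -/
lemma exists_bicausal_lintegral_offDiag_le {d T : ℕ} (hT : 1 ≤ T) {μ ν : Measure (Traj d T)}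
    [IsProbabilityMeasure μ] [IsProbabilityMeasure ν]
    {η : ∀ t, Kernel (Traj d t) (Fin d → ℝ)} [∀ t, IsMarkovKernel (η t)]
    (hν : IsDisintegration ν η) {W : ∀ t, Traj d t → ℝ≥0∞} (hW : ∀ t, Measurable (W t))
    (hWr : ∀ t (h : t ≤ T) x, W t (restr d h x) ≤ W T x)
    (hWμ : ∫⁻ x, W T x ∂μ ≠ ∞) (hWν : ∫⁻ x, W T x ∂ν ≠ ∞) {C : ℕ → ℝ≥0∞}
    (hC : ∀ t, 1 ≤ t → t + 1 ≤ T → ∀ x,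
      ∫⁻ u, W (t + 1) (snocPath x u) ∂η t x ≤ C (t + 1) * W t x) :
    ∃ π ∈ BCpl μ ν, ∀ γ ∈ Cpl μ ν,
      ∫⁻ q in {q : Traj d T × Traj d T | q.1 ≠ q.2}, (W T q.1 + W T q.2) ∂π
        ≤ (1 + 2 * ∑ t ∈ Finset.Icc 1 (T - 1), ∏ s ∈ Finset.Icc (t + 1) T, C s)
          * ∫⁻ q in {q : Traj d T × Traj d T | q.1 ≠ q.2}, (W T q.1 + W T q.2) ∂γ := by
  obtain ⟨κ, hκ, hμ⟩ := exists_isDisintegration μ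
  choose K D hK hD hK₁ hK₂ hKD using fun t => exists_coupling_kernel (κ t) (η t)
  have hπ : pathCoupling K T ∈ BCpl μ ν := pathCoupling_mem_BCpl hμ hν hK₁ hK₂
  refine ⟨pathCoupling K T, hπ, fun γ hγ => ?_⟩
  have hoff : MeasurableSet {q : Traj d T × Traj d T | q.1 ≠ q.2} := measurableSet_diagonal.compl
  have hW₁ : Measurable fun q : Traj d T × Traj d T => W T q.1 := (hW T).comp measurable_fst
  set V := ∫⁻ q in {q : Traj d T × Traj d T | q.1 ≠ q.2}, (W T q.1 + W T q.2) ∂γ with hV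
  set N : ℕ → ℝ≥0∞ := fun t => ∫⁻ z, {z : Traj d t × Traj d t | z.1 ≠ z.2}.indicator
    (fun z => W t z.2) z ∂pathCoupling K t with hN
  set A : ∀ t, t ≤ T → ℝ≥0∞ := fun t h =>
    ∫⁻ q, {q : Traj d T × Traj d T | restr d h q.1 ≠ restr d h q.2}.indicator
      (fun q => W t (restr d h q.2)) q ∂γ with hA
  set B : ∀ t, t ≤ T → ℝ≥0∞ := fun t h =>
    ∫⁻ q, {q : Traj d T × Traj d T | restr d h q.1 ≠ restr d h q.2}.indicator
      (fun q => W t (restr d h q.1)) q ∂γ with hB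
  have hAB t (h : t ≤ T) : A t h + B t h ≤ V := by
    have hm : Measurable fun q : Traj d T × Traj d T =>
        {q : Traj d T × Traj d T | restr d h q.1 ≠ restr d h q.2}.indicator
          (fun q => W t (restr d h q.2)) q :=
      ((hW t).comp ((measurable_restr d h).comp measurable_snd)).indicator
        ((((measurable_restr d h).comp measurable_fst).prodMk
          ((measurable_restr d h).comp measurable_snd)) measurableSet_diagonal.compl)
    rw [hV, ← lintegral_indicator hoff, hA, hB]
    change _ + _ ≤ _
    rw [← lintegral_add_left hm]
    refine lintegral_mono fun q => ?_
    by_cases hq : restr d h q.1 = restr d h q.2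
    · simp [hq]
    · have hqr : q ∈ {q : Traj d T × Traj d T | restr d h q.1 ≠ restr d h q.2} := hq
      have hqT : q ∈ {q : Traj d T × Traj d T | q.1 ≠ q.2} := fun e => hq (by rw [e])
      rw [Set.indicator_of_mem hqr, Set.indicator_of_mem hqr, Set.indicator_of_mem hqT, add_comm]
      exact add_le_add (hWr t h _) (hWr t h _)
  have hstep t (h : t + 1 ≤ T) {c : ℝ≥0∞}
      (hc : ∀ x y : Traj d t, x ≠ y → ∫⁻ u, W (t + 1) (snocPath x u) ∂η t x ≤ c * W t x) :
      N (t + 1) ≤ c * N t + A (t + 1) h + c * B t (Nat.le_of_succ_le h) :=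
    lintegral_offDiag_pathCoupling_succ_le hμ hν hK₁ hK₂ hD hKD hW hγ.2.1 hγ.2.2 h
      (ne_top_of_le_ne_top hWμ (lintegral_mono fun x => hWr _ h x)) hc
  have hind t (ht : 1 ≤ t) (h : t ≤ T) : N t ≤ A t h
      + (∑ r ∈ Finset.Icc 1 (t - 1), ∏ s ∈ Finset.Icc (r + 1) t, C s) * V := by
    induction t, ht using Nat.le_induction with
    | base =>
      refine (hstep 0 h (c := 0) fun x y hxy => absurd (Subsingleton.elim x y) hxy).trans ?_
      simp
    | succ t ht ih =>
      have hh := Nat.le_of_succ_le h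
      refine (hstep t h (c := C (t + 1)) fun x y _ => hC t ht h x).trans ?_
      rw [Nat.add_sub_cancel, sum_prod_Icc_succ C ht]
      set S := ∑ r ∈ Finset.Icc 1 (t - 1), ∏ s ∈ Finset.Icc (r + 1) t, C s
      calc C (t + 1) * N t + A (t + 1) h + C (t + 1) * B t hh
          ≤ C (t + 1) * (A t hh + S * V) + A (t + 1) h + C (t + 1) * B t hh := by
            gcongr
            exact ih hh
        _ = A (t + 1) h + C (t + 1) * ((A t hh + B t hh) + S * V) := by ring
        _ ≤ A (t + 1) h + C (t + 1) * (V + S * V) := by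
            gcongr
            exact hAB t hh
        _ = _ := by ring
  have hA_eq : A T le_rfl = ∫⁻ q in {q : Traj d T × Traj d T | q.1 ≠ q.2}, W T q.2 ∂γ :=
    lintegral_indicator hoff _
  have hB_eq : B T le_rfl = ∫⁻ q in {q : Traj d T × Traj d T | q.1 ≠ q.2}, W T q.1 ∂γ :=
    lintegral_indicator hoff _
  have hN_eq : N T
      = ∫⁻ q in {q : Traj d T × Traj d T | q.1 ≠ q.2}, W T q.2 ∂pathCoupling K T :=
    lintegral_indicator hoff _
  have hA_fin : A T le_rfl ≠ ∞ := by
    rw [hA_eq]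
    refine ne_top_of_le_ne_top hWν ((setLIntegral_le_lintegral _ _).trans_eq ?_)
    rw [← hγ.2.2, lintegral_map (hW T) measurable_snd]
  have hNT := hind T hT le_rfl
  set S := ∑ r ∈ Finset.Icc 1 (T - 1), ∏ s ∈ Finset.Icc (r + 1) T, C s
  have hexch := lintegral_offDiag_add_comm hπ.1 hγ (hW T) hWμ
  rw [← hA_eq, ← hB_eq, ← hN_eq] at hexch
  rw [lintegral_add_left hW₁, ← hN_eq]
  have hX : ∫⁻ q in {q : Traj d T × Traj d T | q.1 ≠ q.2}, W T q.1 ∂pathCoupling K T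
      ≤ S * V + B T le_rfl := by
    rw [← ENNReal.add_le_add_iff_right hA_fin, hexch]
    refine (add_le_add_left hNT _).trans_eq ?_
    ring
  calc _ ≤ (S * V + B T le_rfl) + (A T le_rfl + S * V) := add_le_add hX hNT
    _ = (A T le_rfl + B T le_rfl) + 2 * S * V := by ring
    _ ≤ V + 2 * S * V := add_le_add_left (hAB T le_rfl) _
    _ = (1 + 2 * S) * V := by ring

lemma wp_nonneg (p : ℝ) {d t : ℕ} (x : Traj d t) : 0 ≤ wp p x := by
  unfold wp
  positivity

lemma measurable_wp (p : ℝ) (d t : ℕ) : Measurable (wp p : Traj d t → ℝ) := by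
  unfold wp
  fun_prop

lemma wp_snocPath (p : ℝ) {d t : ℕ} (x : Traj d t) (u : Fin d → ℝ) :
    wp p (snocPath x u) = wp p x + ∑ j, |u j| ^ p := by
  simp only [wp, snocPath, Fin.sum_univ_castSucc, Fin.snoc_castSucc, Fin.snoc_last, add_assoc]

lemma wp_restr_le (p : ℝ) {d t T : ℕ} (h : t ≤ T) (x : Traj d T) :
    wp p (restr d h x) ≤ wp p x := by
  induction T, h using Nat.le_induction with
  | base => exact le_rfl
  | succ T h ih =>
    refine (ih (restr d (Nat.le_succ T) x)).trans ?_
    have hx : snocPath (restr d (Nat.le_succ T) x) (x (Fin.last T)) = x :=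
      snocPath_restr (le_refl (T + 1)) x
    conv_rhs => rw [← hx, wp_snocPath]
    have : 0 ≤ ∑ j, |x (Fin.last T) j| ^ p := by positivity
    linarith

lemma lintegral_wp_ne_top {p : ℝ} {d T : ℕ} {μ : Measure (Traj d T)} [IsFiniteMeasure μ]
    (hμ : ∫⁻ x, ENNReal.ofReal (∑ i, ∑ j, |x i j| ^ p) ∂μ < ⊤) :
    ∫⁻ x, ENNReal.ofReal (wp p x) ∂μ ≠ ∞ := by
  have hsplit (x : Traj d T) : ENNReal.ofReal (wp p x)
      = 1 + ENNReal.ofReal (∑ i, ∑ j, |x i j| ^ p) := by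
    rw [wp, ENNReal.ofReal_add zero_le_one (by positivity), ENNReal.ofReal_one]
  simp_rw [hsplit]
  rw [lintegral_add_left measurable_const, lintegral_const, one_mul]
  exact ENNReal.add_ne_top.2 ⟨measure_ne_top _ _, hμ.ne⟩

lemma abs_sub_rpow_le {p : ℝ} (hp : 0 ≤ p) (a b : ℝ) :
    |a - b| ^ p ≤ 2 ^ p * (|a| ^ p + |b| ^ p) := by
  have hab : |a - b| ≤ 2 * max |a| |b| := by
    have := abs_sub a b
    have := le_max_left |a| |b|
    have := le_max_right |a| |b|
    linarith
  calc |a - b| ^ p ≤ (2 * max |a| |b|) ^ p := Real.rpow_le_rpow (abs_nonneg _) hab hp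
    _ = 2 ^ p * (max |a| |b|) ^ p := Real.mul_rpow zero_le_two (by positivity)
    _ ≤ _ := by
      gcongr
      have ha := Real.rpow_nonneg (abs_nonneg a) p
      have hb := Real.rpow_nonneg (abs_nonneg b) p
      rcases max_cases |a| |b| with ⟨h, _⟩ | ⟨h, _⟩ <;> rw [h] <;> linarith

lemma sum_abs_sub_rpow_le {p : ℝ} (hp : 0 ≤ p) {d T : ℕ} (x y : Traj d T) :
    ∑ i, ∑ j, |x i j - y i j| ^ p ≤ 2 ^ p * (wp p x + wp p y) := by
  calc ∑ i, ∑ j, |x i j - y i j| ^ p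
      ≤ ∑ i, ∑ j, 2 ^ p * (|x i j| ^ p + |y i j| ^ p) :=
        Finset.sum_le_sum fun i _ => Finset.sum_le_sum fun j _ => abs_sub_rpow_le hp _ _
    _ = 2 ^ p * (∑ i, ∑ j, |x i j| ^ p + ∑ i, ∑ j, |y i j| ^ p) := by
        simp only [← Finset.mul_sum, Finset.sum_add_distrib]
    _ ≤ _ := by
        unfold wp
        gcongr <;> linarith

/-- The adapted Wasserstein distance is dominated by the adapted total variation. -/
lemma AWpow_le_ATVw {p : ℝ} (hp : 0 < p) {d T : ℕ} (μ ν : Measure (Traj d T)) :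
    AWpow p μ ν ≤ ENNReal.ofReal ((2 : ℝ) ^ p) * ATVw (wp p) μ ν := by
  have h2 : ENNReal.ofReal ((2 : ℝ) ^ p) ≠ 0 := by
    rw [Ne, ENNReal.ofReal_eq_zero, not_le]
    positivity
  have hoff : MeasurableSet {q : Traj d T × Traj d T | q.1 ≠ q.2} := measurableSet_diagonal.compl
  unfold AWpow ATVw
  simp only [ENNReal.mul_iInf_of_ne h2 ENNReal.ofReal_ne_top]
  refine iInf₂_mono fun π _ => ?_
  rw [← lintegral_const_mul' _ _ ENNReal.ofReal_ne_top, ← lintegral_indicator hoff]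
  refine lintegral_mono fun q => ?_
  by_cases hq : q.1 = q.2
  · simp [hq, Real.zero_rpow hp.ne']
  · have hq' : q ∈ {q : Traj d T × Traj d T | q.1 ≠ q.2} := hq
    rw [Set.indicator_of_mem hq', ← ENNReal.ofReal_add (wp_nonneg p _) (wp_nonneg p _),
      ← ENNReal.ofReal_mul (by positivity)]
    exact ENNReal.ofReal_le_ofReal (sum_abs_sub_rpow_le hp.le _ _)

/-- A disintegration that satisfies the conditional moment bounds almost everywhere can be modified
on null sets so that the weight grows by bounded factors everywhere. -/
lemma exists_isDisintegration_lintegral_wp_le {p : ℝ} (hp : 0 < p) {d T : ℕ}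
    {ν : Measure (Traj d T)} {c : ℕ → ℝ} (hc : ∀ t, 2 ≤ t → t ≤ T → 0 ≤ c t)
    (κ : ∀ t : ℕ, Traj d t → Measure (Fin d → ℝ)) (hκm : ∀ t, Measurable (κ t))
    (hκp : ∀ t x, IsProbabilityMeasure (κ t x))
    (hκν : ∀ t, ∀ h : t + 1 ≤ T, ν.map (restr d h) =
      (ν.map (restr d (Nat.le_of_succ_le h))).bind (fun x => (κ t x).map (Fin.snoc x)))
    (hκc : ∀ t, 1 ≤ t → ∀ h : t + 1 ≤ T, ∀ᵐ y ∂(ν.map (restr d (Nat.le_of_succ_le h))),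
      (∫⁻ z, ENNReal.ofReal (∑ j, |z j| ^ p) ∂(κ t y))
        ≤ ENNReal.ofReal (c (t + 1) * (1 + ∑ i, ∑ j, |y i j| ^ p))) :
    ∃ η : ∀ t, Kernel (Traj d t) (Fin d → ℝ), (∀ t, IsMarkovKernel (η t)) ∧
      IsDisintegration ν η ∧ ∀ t, 1 ≤ t → t + 1 ≤ T → ∀ x,
        ∫⁻ u, ENNReal.ofReal (wp p (snocPath x u)) ∂η t x
          ≤ ENNReal.ofReal (1 + c (t + 1)) * ENNReal.ofReal (wp p x) := by
  classical
  let k (t : ℕ) : Kernel (Traj d t) (Fin d → ℝ) := ⟨κ t, hκm t⟩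
  have hk t : IsMarkovKernel (k t) := ⟨hκp t⟩
  have hf : Measurable fun z : Fin d → ℝ => ENNReal.ofReal (∑ j, |z j| ^ p) := by fun_prop
  set s : ∀ t, Set (Traj d t) := fun t => {y | 1 ≤ t →
    ∫⁻ z, ENNReal.ofReal (∑ j, |z j| ^ p) ∂k t y ≤ ENNReal.ofReal (c (t + 1) * wp p y)} with hs
  have hsm t : MeasurableSet (s t) := by
    by_cases ht : 1 ≤ t
    · simp only [hs, ht, true_imp_iff]
      exact measurableSet_le hf.lintegral_kernel ((measurable_wp p d t).const_mul _).ennreal_ofReal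
    · simp [hs, ht]
  let η (t : ℕ) : Kernel (Traj d t) (Fin d → ℝ) :=
    Kernel.piecewise (hsm t) (k t) (Kernel.const _ (Measure.dirac 0))
  have hη t : IsMarkovKernel (η t) := by
    have := hk t
    exact inferInstanceAs (IsMarkovKernel (Kernel.piecewise _ _ _))
  refine ⟨η, hη, fun t h F hF => ?_, fun t ht h x => ?_⟩
  · have hh := Nat.le_of_succ_le h
    have hae : ∀ᵐ y ∂ν.map (restr d hh), η t y = κ t y := by
      have hmem : ∀ᵐ y ∂ν.map (restr d hh), y ∈ s t := by
        by_cases ht : 1 ≤ t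
        · filter_upwards [hκc t ht h] with y hy _ using hy
        · exact .of_forall fun y ht' => absurd ht' ht
      filter_upwards [hmem] with y hy
      rw [Kernel.piecewise_apply, if_pos hy]
      rfl
    have hbind : Measurable fun x : Traj d t =>
        (κ t x).map (Fin.snoc (α := fun _ => Fin d → ℝ) x) := by
      refine Measure.measurable_of_measurable_coe _ fun B hB => ?_
      have hpre := measurable_snocPath d t hB
      have heq (x : Traj d t) : (κ t x).map (Fin.snoc (α := fun _ => Fin d → ℝ) x) B
          = k t x (Prod.mk x ⁻¹' ((fun q : Traj d t × (Fin d → ℝ) => snocPath q.1 q.2) ⁻¹' B)) :=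
        Measure.map_apply (measurable_snocPath_left x) hB
      simp_rw [heq]
      exact Kernel.measurable_kernel_prodMk_left hpre
    have hFη : Measurable fun y : Traj d t => ∫⁻ u, F (snocPath y u) ∂η t y :=
      (hF.comp (measurable_snocPath d t)).lintegral_kernel_prod_right'
    calc ∫⁻ x, F (restr d h x) ∂ν = ∫⁻ y, F y ∂ν.map (restr d h) :=
          (lintegral_map hF (measurable_restr d h)).symm
      _ = ∫⁻ y, ∫⁻ z, F z ∂(κ t y).map (Fin.snoc (α := fun _ => Fin d → ℝ) y)
            ∂ν.map (restr d hh) := by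
          rw [hκν t h, Measure.lintegral_bind hbind.aemeasurable hF.aemeasurable]
      _ = ∫⁻ y, ∫⁻ u, F (snocPath y u) ∂η t y ∂ν.map (restr d hh) := by
          refine lintegral_congr_ae ?_
          filter_upwards [hae] with y hy
          rw [hy]
          exact lintegral_map hF (measurable_snocPath_left y)
      _ = _ := lintegral_map hFη (measurable_restr d hh)
  · have hc' := hc (t + 1) (by lia) h
    have hmom : ∫⁻ u, ENNReal.ofReal (∑ j, |u j| ^ p) ∂η t x
        ≤ ENNReal.ofReal (c (t + 1) * wp p x) := by
      by_cases hx : x ∈ s t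
      · rw [Kernel.piecewise_apply, if_pos hx]
        exact hx ht
      · rw [Kernel.piecewise_apply, if_neg hx, Kernel.const_apply, lintegral_dirac' _ hf]
        simp [Real.zero_rpow hp.ne']
    calc ∫⁻ u, ENNReal.ofReal (wp p (snocPath x u)) ∂η t x
        = ENNReal.ofReal (wp p x) + ∫⁻ u, ENNReal.ofReal (∑ j, |u j| ^ p) ∂η t x := by
          have hsplit (u : Fin d → ℝ) : ENNReal.ofReal (wp p (snocPath x u))
              = ENNReal.ofReal (wp p x) + ENNReal.ofReal (∑ j, |u j| ^ p) := by
            rw [wp_snocPath, ENNReal.ofReal_add (wp_nonneg p x) (by positivity)]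
          simp_rw [hsplit]
          rw [lintegral_add_left measurable_const, lintegral_const, measure_univ, mul_one]
      _ ≤ ENNReal.ofReal (wp p x) + ENNReal.ofReal (c (t + 1) * wp p x) :=
          add_le_add_right hmom _
      _ = _ := by
          rw [← ENNReal.ofReal_add (wp_nonneg p x) (mul_nonneg hc' (wp_nonneg p x)),
            ← ENNReal.ofReal_mul (by linarith)]
          ring_nf

/-- `AW_p^p(μ,ν) ≤ 2^p ATV_p^p(μ,ν)`; and under the conditional moment
assumption, `AW_p^p(μ,ν) ≤ 2^p (1 + 2 ∑_{t=1}^{T-1} ∏_{s=t+1}^{T}(1+c_s)) TV_p^p(μ,ν)`. -/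
theorem aw_le_atv_p (d T : ℕ) (hd : 1 ≤ d) (hT : 1 ≤ T) (p : ℝ) (hp : 1 ≤ p)
    (μ ν : Measure (Traj d T)) [IsProbabilityMeasure μ] [IsProbabilityMeasure ν]
    (hμmom : (∫⁻ x, ENNReal.ofReal (∑ i, ∑ j, |x i j| ^ p) ∂μ) < ⊤)
    (hνmom : (∫⁻ x, ENNReal.ofReal (∑ i, ∑ j, |x i j| ^ p) ∂ν) < ⊤) :
    AWpow p μ ν ≤ ENNReal.ofReal ((2 : ℝ) ^ p) * ATVw (wp p) μ ν ∧
    (∀ (c : ℕ → ℝ), (∀ t, 2 ≤ t → t ≤ T → 0 ≤ c t) →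
      ∀ (κ : ∀ t : ℕ, Traj d t → Measure (Fin d → ℝ)),
        (∀ t, Measurable (κ t)) → (∀ t x, IsProbabilityMeasure (κ t x)) →
        (∀ t, ∀ h : t + 1 ≤ T,
          ν.map (restr d h) =
            (ν.map (restr d (Nat.le_of_succ_le h))).bind (fun x => (κ t x).map (Fin.snoc x))) →
        (∀ t, 1 ≤ t → ∀ h : t + 1 ≤ T,
          ∀ᵐ y ∂(ν.map (restr d (Nat.le_of_succ_le h))),
            (∫⁻ z, ENNReal.ofReal (∑ j, |z j| ^ p) ∂(κ t y))
              ≤ ENNReal.ofReal (c (t + 1) * (1 + ∑ i, ∑ j, |y i j| ^ p))) →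
      AWpow p μ ν ≤
        ENNReal.ofReal ((2 : ℝ) ^ p *
            (1 + 2 * ∑ t ∈ Finset.Icc 1 (T - 1), ∏ s ∈ Finset.Icc (t + 1) T, (1 + c s)))
          * TVw (wp p) μ ν) := by
  have hp0 : 0 < p := by linarith
  refine ⟨AWpow_le_ATVw hp0 μ ν, fun c hc κ hκm hκp hκν hκc => ?_⟩
  obtain ⟨η, hη, hν, hηc⟩ :=
    exists_isDisintegration_lintegral_wp_le hp0 hc κ hκm hκp hκν hκc
  obtain ⟨π, hπ, hπγ⟩ := exists_bicausal_lintegral_offDiag_le (μ := μ) hT hν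
    (W := fun t x => ENNReal.ofReal (wp p x)) (C := fun t => ENNReal.ofReal (1 + c t))
    (fun t => (measurable_wp p d t).ennreal_ofReal)
    (fun t h x => ENNReal.ofReal_le_ofReal (wp_restr_le p h x))
    (lintegral_wp_ne_top hμmom) (lintegral_wp_ne_top hνmom) hηc
  have hc1 t (ht : t ∈ Finset.Icc 1 (T - 1)) : ∀ s ∈ Finset.Icc (t + 1) T, 0 ≤ 1 + c s := by
    intro s hs
    have h₁ := Finset.mem_Icc.1 ht
    have h₂ := Finset.mem_Icc.1 hs
    have := hc s (by lia) h₂.2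
    linarith
  have hS : 0 ≤ ∑ t ∈ Finset.Icc 1 (T - 1), ∏ s ∈ Finset.Icc (t + 1) T, (1 + c s) :=
    Finset.sum_nonneg fun t ht => Finset.prod_nonneg (hc1 t ht)
  have hSe : ENNReal.ofReal
        (1 + 2 * ∑ t ∈ Finset.Icc 1 (T - 1), ∏ s ∈ Finset.Icc (t + 1) T, (1 + c s))
      = 1 + 2 * ∑ t ∈ Finset.Icc 1 (T - 1),
          ∏ s ∈ Finset.Icc (t + 1) T, ENNReal.ofReal (1 + c s) := by
    rw [ENNReal.ofReal_add zero_le_one (by positivity), ENNReal.ofReal_one,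
      ENNReal.ofReal_mul zero_le_two, ENNReal.ofReal_ofNat,
      ENNReal.ofReal_sum_of_nonneg fun t ht => Finset.prod_nonneg (hc1 t ht)]
    congr 2
    exact Finset.sum_congr rfl fun t ht => ENNReal.ofReal_prod_of_nonneg (hc1 t ht)
  have hS1 : ENNReal.ofReal
      (1 + 2 * ∑ t ∈ Finset.Icc 1 (T - 1), ∏ s ∈ Finset.Icc (t + 1) T, (1 + c s)) ≠ 0 := by
    rw [Ne, ENNReal.ofReal_eq_zero, not_le]
    positivity
  rw [ENNReal.ofReal_mul (by positivity), mul_assoc]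
  refine (AWpow_le_ATVw hp0 μ ν).trans (mul_le_mul_right ?_ _)
  unfold TVw
  simp only [ENNReal.mul_iInf_of_ne hS1 ENNReal.ofReal_ne_top]
  refine (iInf₂_le π hπ).trans (le_iInf₂ fun γ hγ => ?_)
  rw [hSe]
  exact hπγ γ hγ

end
end

section
/- Let p ≥ 1 and let 𝒦 ⊆ ℝ^{dT} be a Borel set with finite diameter D := sup_{x,y ∈ 𝒦} (|x − y|_p^p)^{1/p} with respect to the metric (x, y) ↦ (|x − y|_p^p)^{1/p}. If μ, ν are Borel probability measures concentrated on 𝒦, then AW_p(μ, ν)^p ≤ D^p · ATV(μ, ν) ≤ (2T − 1) · D^p · TV(μ, ν). -/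
open MeasureTheory ProbabilityTheory
open scoped ENNReal

noncomputable section

/-- `E[v(r Y) | X]` is a function of `r X` under `π`, where `(X, Y)` is the canonical pair; the
density is taken with respect to the reference measure `μ` on the first component. -/
def CausalAt {Ω E : Type*} [MeasurableSpace Ω] [MeasurableSpace E] (r : Ω → E) (μ : Measure Ω)
    (π : Measure (Ω × Ω)) : Prop :=
  ∀ v : E → ℝ≥0∞, Measurable v → ∃ g : E → ℝ≥0∞, Measurable g ∧
    ∀ u : Ω → ℝ≥0∞, Measurable u →
      ∫⁻ q, u q.1 * v (r q.2) ∂π = ∫⁻ x, u x * g (r x) ∂μ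

lemma CausalAt.add {Ω E : Type*} [MeasurableSpace Ω] [MeasurableSpace E] {r : Ω → E}
    (hr : Measurable r) {μ : Measure Ω} {π₁ π₂ : Measure (Ω × Ω)}
    (h₁ : CausalAt r μ π₁) (h₂ : CausalAt r μ π₂) : CausalAt r μ (π₁ + π₂) := by
  intro v hv
  obtain ⟨g₁, hg₁, e₁⟩ := h₁ v hv
  obtain ⟨g₂, hg₂, e₂⟩ := h₂ v hv
  refine ⟨g₁ + g₂, hg₁.add hg₂, fun u hu => ?_⟩
  rw [lintegral_add_measure, e₁ u hu, e₂ u hu, ← lintegral_add_left (by fun_prop)]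
  simp [mul_add]

lemma CausalAt.zero {Ω E : Type*} [MeasurableSpace Ω] [MeasurableSpace E] (r : Ω → E)
    (μ : Measure Ω) : CausalAt r μ 0 :=
  fun _ _ => ⟨0, measurable_zero, by simp⟩

/-- A measure carried by `{r X = r Y}` whose first marginal has an `r`-measurable density is
causal at `r`. -/
lemma CausalAt.of_ae_eq {Ω E : Type*} [MeasurableSpace Ω] [MeasurableSpace E] {r : Ω → E}
    (hr : Measurable r) {μ : Measure Ω} {l : E → ℝ≥0∞} (hl : Measurable l)
    {π : Measure (Ω × Ω)} (hfst : π.map Prod.fst = μ.withDensity (l ∘ r))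
    (hπ : ∀ᵐ q ∂π, r q.1 = r q.2) : CausalAt r μ π := by
  intro v hv
  refine ⟨fun y => l y * v y, hl.mul hv, fun u hu => ?_⟩
  calc ∫⁻ q, u q.1 * v (r q.2) ∂π = ∫⁻ q, (fun x => u x * v (r x)) q.1 ∂π := by
        refine lintegral_congr_ae ?_
        filter_upwards [hπ] with q hq
        simp [hq]
    _ = ∫⁻ x, u x * v (r x) ∂(π.map Prod.fst) :=
        (lintegral_map (f := fun x => u x * v (r x)) (by fun_prop) measurable_fst).symm
    _ = _ := by
        rw [hfst, lintegral_withDensity_eq_lintegral_mul _ (by fun_prop) (by fun_prop)]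
        refine lintegral_congr fun x => ?_
        simp only [Pi.mul_apply, Function.comp_apply]
        ring

lemma condIndep_of_forall_lintegral {Ω' Ω E : Type*} {m' mΩ' : MeasurableSpace Ω'}
    [StandardBorelSpace Ω']
    [MeasurableSpace Ω] [MeasurableSpace E] {P : Measure Ω'} [IsProbabilityMeasure P]
    {X Y : Ω' → Ω} (hX : Measurable X) (hY : Measurable Y) {r : Ω → E} (hr : Measurable r)
    (hm' : m' = MeasurableSpace.comap (fun ω => r (X ω)) inferInstance) (hm : m' ≤ mΩ')
    (h : ∀ v : E → ℝ≥0∞, Measurable v → ∃ g : E → ℝ≥0∞, Measurable g ∧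
      ∀ u : Ω → ℝ≥0∞, Measurable u →
        ∫⁻ ω, u (X ω) * v (r (Y ω)) ∂P = ∫⁻ ω, u (X ω) * g (r (X ω)) ∂P) :
    CondIndep m' (MeasurableSpace.comap (fun ω => r (Y ω)) inferInstance)
      (MeasurableSpace.comap X inferInstance) hm P := by
  refine (condIndep_iff _ _ _ _ (hr.comp hY).comap_le hX.comap_le P).mpr ?_
  rintro _ _ ⟨B, hB, rfl⟩ ⟨A, hA, rfl⟩
  obtain ⟨g, hg, e⟩ := h (B.indicator 1) (measurable_one.indicator hB)
  have hgfin : ∫⁻ ω, g (r (X ω)) ∂P ≠ ∞ := by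
    have := e 1 measurable_one
    simp only [Pi.one_apply, one_mul] at this
    rw [← this]
    refine ne_top_of_le_ne_top (b := ∫⁻ ω, 1 ∂P) (by simp) (lintegral_mono fun ω => ?_)
    exact Set.indicator_le_self' (by simp) _
  set G : Ω' → ℝ := fun ω => (g (r (X ω))).toReal with hG
  have hGmeas : Measurable[m'] G :=
    hm' ▸ hg.ennreal_toReal.comp (comap_measurable _)
  have hGint : Integrable G P :=
    integrable_toReal_of_lintegral_ne_top (by fun_prop) hgfin
  have key : ∀ A : Set Ω, MeasurableSet A →
      P⟦(fun ω => r (Y ω)) ⁻¹' B ∩ X ⁻¹' A | m'⟧ =ᵐ[P] G * P⟦X ⁻¹' A | m'⟧ := by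
    intro A hA
    have hGA : Integrable (G * (X ⁻¹' A).indicator fun _ => (1 : ℝ)) P := by
      have : (G * (X ⁻¹' A).indicator fun _ => (1 : ℝ)) = (X ⁻¹' A).indicator G := by
        ext ω; by_cases hω : ω ∈ X ⁻¹' A <;> simp [hω]
      rw [this]
      exact hGint.indicator (hX hA)
    have hind : Integrable ((X ⁻¹' A).indicator fun _ => (1 : ℝ)) P :=
      (integrable_const _).indicator (hX hA)
    refine Filter.EventuallyEq.trans (g := P[G * (X ⁻¹' A).indicator fun _ => (1 : ℝ) | m']) ?_
      (condExp_mul_of_stronglyMeasurable_left hGmeas.stronglyMeasurable hGA hind)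
    have hBA : MeasurableSet ((fun ω => r (Y ω)) ⁻¹' B ∩ X ⁻¹' A) :=
      ((hr.comp hY) hB).inter (hX hA)
    symm
    refine ae_eq_condExp_of_forall_setIntegral_eq hm ((integrable_const _).indicator hBA)
      (fun _ _ _ => integrable_condExp.integrableOn) ?_
      stronglyMeasurable_condExp.aestronglyMeasurable
    intro s hs _
    obtain ⟨S, hS, rfl⟩ : MeasurableSet[MeasurableSpace.comap (fun ω => r (X ω)) inferInstance] s :=
      hm' ▸ hs
    have hS' : MeasurableSet ((fun ω => r (X ω)) ⁻¹' S) := (hr.comp hX) hS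
    rw [setIntegral_condExp hm hGA hs,
      integral_eq_lintegral_of_nonneg_ae (Filter.Eventually.of_forall fun ω => by
        by_cases hω : ω ∈ X ⁻¹' A <;> simp [hω, hG]) (by
        exact hGA.aestronglyMeasurable.restrict),
      integral_eq_lintegral_of_nonneg_ae (Filter.Eventually.of_forall fun ω =>
        Set.indicator_nonneg (by simp) _)
        (((measurable_const.indicator hBA)).aestronglyMeasurable)]
    congr 1
    have := e (A.indicator 1 * (r ⁻¹' S).indicator 1)
      ((measurable_one.indicator hA).mul (measurable_one.indicator (hr hS)))
    rw [← lintegral_indicator hS', ← lintegral_indicator hS']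
    refine Eq.trans (lintegral_congr_ae ?_) (this.symm.trans (lintegral_congr fun ω => ?_))
    · filter_upwards [ae_lt_top (by fun_prop) hgfin] with ω hω
      by_cases h1 : X ω ∈ A <;> by_cases h2 : r (X ω) ∈ S <;>
        simp [h1, h2, hG, Set.indicator, hω.ne]
    · by_cases h1 : X ω ∈ A <;> by_cases h2 : r (X ω) ∈ S <;>
        by_cases h3 : r (Y ω) ∈ B <;> simp [h1, h2, h3, Set.indicator]
  have hB' : P⟦(fun ω => r (Y ω)) ⁻¹' B | m'⟧ =ᵐ[P] G := by
    have := key Set.univ MeasurableSet.univ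
    simp only [Set.preimage_univ, Set.inter_univ, Set.indicator_univ] at this
    rw [condExp_const hm] at this
    filter_upwards [this] with ω hω
    simpa using hω
  filter_upwards [key A hA, hB'] with ω h1 h2
  exact h1.trans (by rw [Pi.mul_apply, ← h2]; rfl)

lemma lintegral_condDistrib_id_mul {Ω E : Type*} [MeasurableSpace Ω] [StandardBorelSpace Ω]
    [Nonempty Ω] [MeasurableSpace E] (M : Measure Ω) [IsFiniteMeasure M] {r : Ω → E}
    (hr : Measurable r) {u : Ω → ℝ≥0∞} (hu : Measurable u) {g : E → ℝ≥0∞} (hg : Measurable g) :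
    ∫⁻ y, (∫⁻ x, u x ∂(condDistrib id r M y)) * g y ∂(M.map r) = ∫⁻ x, u x * g (r x) ∂M := by
  have h : (M.map r) ⊗ₘ condDistrib id r M = M.map fun a => (r a, id a) :=
    compProd_map_condDistrib aemeasurable_id
  calc _ = ∫⁻ z, u z.2 * g z.1 ∂((M.map r) ⊗ₘ condDistrib id r M) := by
        rw [Measure.lintegral_compProd (by fun_prop)]
        refine lintegral_congr fun y => ?_
        rw [← lintegral_mul_const _ hu]
    _ = _ := by
        rw [h, lintegral_map (by fun_prop) (by fun_prop)]
        rfl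

lemma ae_condDistrib_id_eq {Ω E : Type*} [MeasurableSpace Ω] [StandardBorelSpace Ω]
    [Nonempty Ω] [MeasurableSpace E] [MeasurableEq E] (M : Measure Ω)
    [IsFiniteMeasure M] {r : Ω → E} (hr : Measurable r) :
    ∀ᵐ y ∂(M.map r), ∀ᵐ x ∂(condDistrib id r M y), y = r x := by
  have h : (M.map r) ⊗ₘ condDistrib id r M = M.map fun a => (r a, id a) :=
    compProd_map_condDistrib aemeasurable_id
  refine Measure.ae_ae_of_ae_compProd (p := fun z : E × Ω => z.1 = r z.2) ?_
  rw [h, ae_map_iff (by fun_prop) (measurableSet_eq_fun (by fun_prop) (by fun_prop))]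
  simp

/-- The coupling of `M` and `N` which is conditionally independent given their common image
under `r`. -/
lemma exists_coupling_over {Ω E : Type*} [MeasurableSpace Ω] [StandardBorelSpace Ω]
    [Nonempty Ω] [MeasurableSpace E] [MeasurableEq E] (M N : Measure Ω)
    [IsFiniteMeasure M] [IsFiniteMeasure N] {r : Ω → E} (hr : Measurable r)
    (h : M.map r = N.map r) :
    ∃ π : Measure (Ω × Ω), π.map Prod.fst = M ∧ π.map Prod.snd = N ∧
      (∀ᵐ q ∂π, r q.1 = r q.2) ∧
      (∀ v : Ω → ℝ≥0∞, Measurable v → ∃ g : E → ℝ≥0∞, Measurable g ∧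
        ∀ u : Ω → ℝ≥0∞, Measurable u → ∫⁻ q, u q.1 * v q.2 ∂π = ∫⁻ x, u x * g (r x) ∂M) ∧
      (∀ v : Ω → ℝ≥0∞, Measurable v → ∃ g : E → ℝ≥0∞, Measurable g ∧
        ∀ u : Ω → ℝ≥0∞, Measurable u → ∫⁻ q, u q.2 * v q.1 ∂π = ∫⁻ x, u x * g (r x) ∂N) := by
  set K := condDistrib id r M with hK
  set L := condDistrib id r N with hL
  set π : Measure (Ω × Ω) := (M.map r).bind (K ×ₖ L) with hπ
  have hint : ∀ f : Ω × Ω → ℝ≥0∞, Measurable f →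
      ∫⁻ q, f q ∂π = ∫⁻ y, ∫⁻ a, ∫⁻ b, f (a, b) ∂(L y) ∂(K y) ∂(M.map r) := by
    intro f hf
    rw [hπ, Measure.lintegral_bind (Kernel.aemeasurable _) hf.aemeasurable]
    exact lintegral_congr fun y => Kernel.lintegral_prod _ _ _ hf
  have hmul : ∀ u v : Ω → ℝ≥0∞, Measurable u → Measurable v →
      ∫⁻ q, u q.1 * v q.2 ∂π = ∫⁻ y, (∫⁻ a, u a ∂(K y)) * (∫⁻ b, v b ∂(L y)) ∂(M.map r) := by
    intro u v hu hv
    rw [hint _ (by fun_prop)]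
    refine lintegral_congr fun y => ?_
    simp_rw [lintegral_const_mul _ hv]
    rw [lintegral_mul_const _ hu]
  have hleft : ∀ u v : Ω → ℝ≥0∞, Measurable u → Measurable v →
      ∫⁻ q, u q.1 * v q.2 ∂π = ∫⁻ x, u x * (∫⁻ b, v b ∂(L (r x))) ∂M := by
    intro u v hu hv
    rw [hmul u v hu hv]
    exact lintegral_condDistrib_id_mul M hr hu (g := fun y => ∫⁻ b, v b ∂(L y))
      hv.lintegral_kernel
  have hright : ∀ u v : Ω → ℝ≥0∞, Measurable u → Measurable v →
      ∫⁻ q, u q.2 * v q.1 ∂π = ∫⁻ x, u x * (∫⁻ b, v b ∂(K (r x))) ∂N := by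
    intro u v hu hv
    simp_rw [mul_comm (u _)]
    rw [hmul v u hv hu, h]
    simp_rw [mul_comm (∫⁻ a, v a ∂(K _))]
    exact lintegral_condDistrib_id_mul N hr hu (g := fun y => ∫⁻ b, v b ∂(K y))
      hv.lintegral_kernel
  refine ⟨π, ?_, ?_, ?_, ?_, ?_⟩
  · ext A hA
    have := hleft (A.indicator 1) 1 (measurable_one.indicator hA) measurable_one
    simp only [Pi.one_apply, mul_one, lintegral_const, measure_univ] at this
    rw [lintegral_indicator_one hA] at this
    rw [Measure.map_apply measurable_fst hA, ← this,
      ← lintegral_indicator_one (measurable_fst hA)]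
    rfl
  · ext A hA
    have := hright (A.indicator 1) 1 (measurable_one.indicator hA) measurable_one
    simp only [Pi.one_apply, mul_one, lintegral_const, measure_univ] at this
    rw [lintegral_indicator_one hA] at this
    rw [Measure.map_apply measurable_snd hA, ← this,
      ← lintegral_indicator_one (measurable_snd hA)]
    rfl
  · have hS : MeasurableSet {q : Ω × Ω | r q.1 = r q.2} :=
      measurableSet_eq_fun (by fun_prop) (by fun_prop)
    rw [ae_iff]
    change π {q : Ω × Ω | r q.1 = r q.2}ᶜ = 0
    rw [← lintegral_indicator_one hS.compl, hint _ (measurable_one.indicator hS.compl)]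
    have hM := ae_condDistrib_id_eq M hr
    have hN := ae_condDistrib_id_eq N hr
    rw [← h] at hN
    rw [lintegral_eq_zero_iff' (Measurable.aemeasurable (by
      have := (measurable_one.indicator hS.compl : Measurable
        ({q : Ω × Ω | r q.1 = r q.2}ᶜ.indicator (1 : Ω × Ω → ℝ≥0∞))).lintegral_kernel (κ := K ×ₖ L)
      simpa only [Kernel.lintegral_prod _ _ _ (measurable_one.indicator hS.compl)] using this))]
    filter_upwards [hM, hN] with y hy hy'
    rw [Pi.zero_apply]
    refine (lintegral_congr_ae (g := fun _ => 0) ?_).trans (by simp)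
    filter_upwards [hy] with a ha
    refine (lintegral_congr_ae (g := fun _ => 0) ?_).trans (by simp)
    filter_upwards [hy'] with b hb
    simp [← ha, ← hb]
  · exact fun v hv => ⟨_, hv.lintegral_kernel, fun u hu => hleft u v hu hv⟩
  · exact fun v hv => ⟨_, hv.lintegral_kernel, fun u hu => hright u v hu hv⟩

lemma map_withDensity_comp {Ω E : Type*} [MeasurableSpace Ω] [MeasurableSpace E] (μ : Measure Ω)
    {r : Ω → E} (hr : Measurable r) {f : E → ℝ≥0∞} (hf : Measurable f) :
    (μ.withDensity (f ∘ r)).map r = (μ.map r).withDensity f := by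
  ext s hs
  rw [Measure.map_apply hr hs, withDensity_apply _ (hr hs), withDensity_apply _ hs,
    setLIntegral_map hs hf hr]
  rfl

lemma isFiniteMeasure_withDensity_of_le_one {Ω : Type*} [MeasurableSpace Ω] (μ : Measure Ω)
    [IsFiniteMeasure μ] {f : Ω → ℝ≥0∞} (hf : ∀ x, f x ≤ 1) :
    IsFiniteMeasure (μ.withDensity f) := by
  refine isFiniteMeasure_withDensity (ne_top_of_le_ne_top (measure_ne_top μ Set.univ) ?_)
  calc ∫⁻ x, f x ∂μ ≤ ∫⁻ _, 1 ∂μ := lintegral_mono hf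
    _ = μ Set.univ := lintegral_one

lemma exists_density_of_le_map {Ω E : Type*} [MeasurableSpace Ω] [MeasurableSpace E]
    (μ : Measure Ω) [IsFiniteMeasure μ] {r : Ω → E} (hr : Measurable r) {f : E → ℝ≥0∞}
    (hf : Measurable f) (hf1 : ∀ y, f y ≤ 1) {ρ : Measure E}
    (hρ : ρ ≤ (μ.withDensity (f ∘ r)).map r) :
    ∃ h : E → ℝ≥0∞, Measurable h ∧ (∀ y, h y ≤ f y) ∧
      (μ.withDensity (h ∘ r)).map r = ρ := by
  set A := (μ.withDensity (f ∘ r)).map r with hA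
  have : IsFiniteMeasure (μ.withDensity (f ∘ r)) :=
    isFiniteMeasure_withDensity_of_le_one μ fun x => hf1 _
  have : IsFiniteMeasure ρ := isFiniteMeasure_of_le A hρ
  have hmeas : Measurable fun y => min 1 (ρ.rnDeriv A y) :=
    measurable_const.min (Measure.measurable_rnDeriv _ _)
  refine ⟨f * fun y => min 1 (ρ.rnDeriv A y), hf.mul hmeas,
    fun y => mul_le_of_le_one_right' (min_le_left _ _), ?_⟩
  rw [map_withDensity_comp μ hr (hf.mul hmeas), withDensity_mul _ hf hmeas,
    ← map_withDensity_comp μ hr hf, ← hA]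
  conv_rhs => rw [← Measure.withDensity_rnDeriv_eq ρ A (Measure.absolutelyContinuous_of_le hρ)]
  refine withDensity_congr_ae ?_
  filter_upwards [Measure.rnDeriv_le_one_of_le hρ] with y hy
  exact min_eq_right hy

lemma lintegral_le_of_eq_add {Ω : Type*} [MeasurableSpace Ω] {μ m μ' : Measure Ω}
    (hμ : μ = m + μ') {δ : ℝ≥0∞} (hδ : μ' Set.univ ≤ δ) {f : Ω → ℝ≥0∞} (hf : ∀ x, f x ≤ 1) :
    ∫⁻ x, f x ∂μ ≤ ∫⁻ x, f x ∂m + δ := by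
  rw [hμ, lintegral_add_measure]
  gcongr
  calc ∫⁻ x, f x ∂μ' ≤ ∫⁻ _, 1 ∂μ' := lintegral_mono hf
    _ ≤ δ := by rwa [lintegral_one]

/-- If `l μ` and `l' ν` agree on the σ-algebra of `r`, then the excess of `l` over `l'` on a common
part `m` of `μ` and `ν` is at most the mass `ν` has outside of `m`. -/
lemma lintegral_tsub_le {Ω E : Type*} [MeasurableSpace Ω] [MeasurableSpace E]
    {μ ν m μ' ν' : Measure Ω} [IsFiniteMeasure m] (hμ : μ = m + μ') (hν : ν = m + ν')
    {δ : ℝ≥0∞} (hδ : ν' Set.univ ≤ δ) {r : Ω → E} (hr : Measurable r) {l l' : E → ℝ≥0∞}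
    (hl : Measurable l) (hl' : Measurable l') (hl'1 : ∀ y, l' y ≤ 1)
    (h : (μ.withDensity (l ∘ r)).map r = (ν.withDensity (l' ∘ r)).map r) :
    ∫⁻ x, (l (r x) - l' (r x)) ∂m ≤ δ := by
  set B : Set E := {y | l' y < l y} with hB
  have hBm : MeasurableSet B := measurableSet_lt hl' hl
  have e : ∫⁻ x, B.indicator l (r x) ∂μ = ∫⁻ x, B.indicator l' (r x) ∂ν := by
    have := congrArg (fun ρ : Measure E => ρ B) h
    simp only [Measure.map_apply hr hBm, withDensity_apply _ (hr hBm)] at this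
    rw [← lintegral_indicator (hr hBm), ← lintegral_indicator (hr hBm)] at this
    exact this
  have h1 : ∫⁻ x, B.indicator l (r x) ∂m ≤ ∫⁻ x, B.indicator l' (r x) ∂m + δ := by
    calc ∫⁻ x, B.indicator l (r x) ∂m ≤ ∫⁻ x, B.indicator l (r x) ∂μ := by
          rw [hμ, lintegral_add_measure]; exact le_self_add
      _ = ∫⁻ x, B.indicator l' (r x) ∂ν := e
      _ ≤ _ := lintegral_le_of_eq_add hν hδ fun x =>
          (Set.indicator_le_self' (by simp) _).trans (hl'1 _)
  have h2 : ∫⁻ x, B.indicator l (r x) ∂m =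
      ∫⁻ x, (l (r x) - l' (r x)) ∂m + ∫⁻ x, B.indicator l' (r x) ∂m := by
    rw [← lintegral_add_right (g := fun x => B.indicator l' (r x)) _ ((hl'.indicator hBm).comp hr)]
    refine lintegral_congr fun x => ?_
    by_cases hx : r x ∈ B
    · simp only [hx, Set.indicator_of_mem]
      exact (tsub_add_cancel_of_le (le_of_lt hx)).symm
    · simp only [hx, not_false_eq_true, Set.indicator_of_notMem, add_zero]
      exact (tsub_eq_zero_of_le (not_lt.mp hx)).symm
  have hfin : ∫⁻ x, B.indicator l' (r x) ∂m ≠ ∞ := by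
    refine ne_top_of_le_ne_top (b := ∫⁻ _, 1 ∂m) (by simp) (lintegral_mono fun x => ?_)
    exact (Set.indicator_le_self' (by simp) _).trans (hl'1 _)
  rw [h2, add_comm (∫⁻ x, B.indicator l' (r x) ∂m)] at h1
  exact (ENNReal.add_le_add_iff_right hfin).mp h1

lemma exists_density_refinement {Ω E : Type*} [MeasurableSpace Ω] [MeasurableSpace E]
    {μ ν m μ' ν' : Measure Ω} [IsFiniteMeasure μ] [IsFiniteMeasure ν]
    (hμ : μ = m + μ') (hν : ν = m + ν') {δ ε : ℝ≥0∞} (hδ : μ' Set.univ ≤ δ) {r : Ω → E}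
    (hr : Measurable r) {l l' : E → ℝ≥0∞} (hl : Measurable l) (hl' : Measurable l')
    (hl1 : ∀ y, l y ≤ 1) (hl'1 : ∀ y, l' y ≤ 1)
    (hε : ∫⁻ x, (l (r x) - l' (r x)) ∂m ≤ ε) :
    ∃ h h' : E → ℝ≥0∞, Measurable h ∧ Measurable h' ∧ (∀ y, h y ≤ l y) ∧ (∀ y, h' y ≤ l' y) ∧
      (μ.withDensity (h ∘ r)).map r = (ν.withDensity (h' ∘ r)).map r ∧
      ∫⁻ x, l (r x) ∂μ ≤ ∫⁻ x, h (r x) ∂μ + (ε + δ) := by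
  have hmin : Measurable fun y => min (l y) (l' y) := hl.min hl'
  set ρ : Measure E := (m.withDensity ((fun y => min (l y) (l' y)) ∘ r)).map r with hρ
  have hmono : ∀ {μ μ' : Measure Ω} {f : E → ℝ≥0∞}, μ = m + μ' →
      (∀ y, min (l y) (l' y) ≤ f y) → ρ ≤ (μ.withDensity (f ∘ r)).map r := by
    intro μ μ' f e hf
    refine Measure.map_mono ?_ hr
    refine Measure.le_iff.mpr fun s hs => ?_
    rw [withDensity_apply _ hs, withDensity_apply _ hs]
    exact lintegral_mono' (Measure.restrict_mono le_rfl (e ▸ Measure.le_add_right le_rfl))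
      fun x => hf _
  obtain ⟨h, hh, hhl, eh⟩ := exists_density_of_le_map μ hr hl hl1
    (hmono hμ fun y => min_le_left _ _)
  obtain ⟨h', hh', hhl', eh'⟩ := exists_density_of_le_map ν hr hl' hl'1
    (hmono hν fun y => min_le_right _ _)
  refine ⟨h, h', hh, hh', hhl, hhl', eh.trans eh'.symm, ?_⟩
  have hmass : ∫⁻ x, h (r x) ∂μ = ∫⁻ x, min (l (r x)) (l' (r x)) ∂m := by
    have := congrArg (fun ρ : Measure E => ρ Set.univ) (eh.trans hρ)
    simpa [Measure.map_apply hr MeasurableSet.univ] using this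
  calc ∫⁻ x, l (r x) ∂μ ≤ ∫⁻ x, l (r x) ∂m + δ := lintegral_le_of_eq_add hμ hδ fun x => hl1 _
    _ = ∫⁻ x, min (l (r x)) (l' (r x)) ∂m + ∫⁻ x, (l (r x) - l' (r x)) ∂m + δ := by
        rw [← lintegral_add_left (f := fun x => min (l (r x)) (l' (r x))) (hmin.comp hr)]
        congr 1
        refine lintegral_congr fun x => ?_
        exact (add_comm _ _).trans tsub_add_min |>.symm
    _ ≤ ∫⁻ x, h (r x) ∂μ + (ε + δ) := by
        rw [hmass, add_assoc]; gcongr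

lemma CausalAt.of_coarser {Ω E E₁ E₂ : Type*} [MeasurableSpace Ω] [MeasurableSpace E]
    [MeasurableSpace E₁] [MeasurableSpace E₂] {r : Ω → E} (hr : Measurable r) {a : E → E₁}
    (ha : Measurable a) {b : E → E₂} (hb : Measurable b) {μ : Measure Ω} {f : E₂ → ℝ≥0∞}
    (hf : Measurable f) {π : Measure (Ω × Ω)}
    (h : ∀ v : Ω → ℝ≥0∞, Measurable v → ∃ g : E₁ → ℝ≥0∞, Measurable g ∧
      ∀ u : Ω → ℝ≥0∞, Measurable u → ∫⁻ q, u q.1 * v q.2 ∂π =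
        ∫⁻ x, u x * g (a (r x)) ∂(μ.withDensity fun x => f (b (r x)))) :
    CausalAt r μ π := by
  intro v hv
  obtain ⟨g, hg, e⟩ := h (fun x => v (r x)) (by fun_prop)
  refine ⟨fun y => f (b y) * g (a y), by fun_prop, fun u hu => ?_⟩
  rw [e u hu, lintegral_withDensity_eq_lintegral_mul _ (by fun_prop) (by fun_prop)]
  refine lintegral_congr fun x => ?_
  simp only [Pi.mul_apply]
  ring

/-- A sub-coupling `π` of `μ` and `ν` whose missing parts are `l μ` and `l' ν`, with densities
depending only on the first `s` coordinates. It is causal in both directions from time `s` on, and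
becomes so at earlier times once a coupling of the missing parts which identifies the first `s`
coordinates is added. -/
structure IsPartialCoupling {d T : ℕ} (μ ν : Measure (Traj d T)) {s : ℕ} (hs : s ≤ T)
    (l l' : Traj d s → ℝ≥0∞) (π : Measure (Traj d T × Traj d T)) : Prop where
  measurable_left : Measurable l
  measurable_right : Measurable l'
  left_le_one : ∀ y, l y ≤ 1
  right_le_one : ∀ y, l' y ≤ 1
  map_eq : (μ.withDensity (l ∘ restr d hs)).map (restr d hs) =
    (ν.withDensity (l' ∘ restr d hs)).map (restr d hs)
  fst_add : π.map Prod.fst + μ.withDensity (l ∘ restr d hs) = μ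
  snd_add : π.map Prod.snd + ν.withDensity (l' ∘ restr d hs) = ν
  causal_of_le : ∀ t (ht : t ≤ T), s ≤ t →
    CausalAt (restr d ht) μ π ∧ CausalAt (restr d ht) ν (π.map Prod.swap)
  causal_add_of_lt : ∀ t (ht : t ≤ T), t < s → ∀ ζ : Measure (Traj d T × Traj d T),
    ζ.map Prod.fst = μ.withDensity (l ∘ restr d hs) →
    ζ.map Prod.snd = ν.withDensity (l' ∘ restr d hs) →
    (∀ᵐ q ∂ζ, restr d hs q.1 = restr d hs q.2) →
    CausalAt (restr d ht) μ (π + ζ) ∧ CausalAt (restr d ht) ν ((π + ζ).map Prod.swap)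

lemma isPartialCoupling_zero {d T : ℕ} (μ ν : Measure (Traj d T)) [IsProbabilityMeasure μ]
    [IsProbabilityMeasure ν] :
    IsPartialCoupling μ ν (Nat.zero_le T) (fun _ => 1) (fun _ => 1) 0 where
  measurable_left := measurable_const
  measurable_right := measurable_const
  left_le_one _ := le_rfl
  right_le_one _ := le_rfl
  map_eq := by
    have h : ((fun _ => 1 : Traj d 0 → ℝ≥0∞) ∘ restr d (Nat.zero_le T)) = 1 := rfl
    rw [h, withDensity_one, withDensity_one]
    ext A hA
    rw [Measure.map_apply (measurable_restr d _) hA, Measure.map_apply (measurable_restr d _) hA]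
    rcases A.eq_empty_or_nonempty with rfl | hne
    · simp
    · simp [Subsingleton.eq_univ_of_nonempty hne]
  fst_add := by
    rw [Measure.map_zero, zero_add]; exact withDensity_one
  snd_add := by
    rw [Measure.map_zero, zero_add]; exact withDensity_one
  causal_of_le t ht _ := by
    rw [Measure.map_zero]; exact ⟨CausalAt.zero _ _, CausalAt.zero _ _⟩
  causal_add_of_lt t _ h := absurd h (Nat.not_lt_zero t)

lemma add_right_cancel_of_isFiniteMeasure {α : Type*} [MeasurableSpace α] {μ ν ρ : Measure α}
    [IsFiniteMeasure ρ] (h : μ + ρ = ν + ρ) : μ = ν := by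
  ext s _
  have := congrArg (fun κ : Measure α => κ s) h
  simp only [Measure.add_apply] at this
  exact (ENNReal.add_left_inj (measure_ne_top ρ s)).mp this

lemma map_fst_map_swap {α : Type*} [MeasurableSpace α] (π : Measure (α × α)) :
    (π.map Prod.swap).map Prod.fst = π.map Prod.snd := by
  rw [Measure.map_map measurable_fst measurable_swap]; rfl

lemma withDensity_tsub_add {Ω E : Type*} [MeasurableSpace Ω] [MeasurableSpace E] (μ : Measure Ω)
    {r : Ω → E} (hr : Measurable r) {l h : E → ℝ≥0∞} (hh : Measurable h) (hle : ∀ y, h y ≤ l y) :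
    μ.withDensity (fun x => l (r x) - h (r x)) + μ.withDensity (h ∘ r) =
      μ.withDensity (l ∘ r) := by
  rw [← withDensity_add_right _ (hh.comp hr)]
  congr 1
  ext x
  exact tsub_add_cancel_of_le (hle _)

lemma IsPartialCoupling.exists_succ {d T : ℕ} {μ ν : Measure (Traj d T)}
    [IsFiniteMeasure μ] [IsFiniteMeasure ν] {s : ℕ} {hs : s + 1 ≤ T}
    {l l' : Traj d s → ℝ≥0∞} {π : Measure (Traj d T × Traj d T)}
    (H : IsPartialCoupling μ ν (Nat.le_of_succ_le hs) l l' π) {h h' : Traj d (s + 1) → ℝ≥0∞}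
    (hh : Measurable h) (hh' : Measurable h')
    (hle : ∀ y, h y ≤ l (restr d (Nat.le_succ s) y))
    (hle' : ∀ y, h' y ≤ l' (restr d (Nat.le_succ s) y))
    (hmap : (μ.withDensity (h ∘ restr d hs)).map (restr d hs) =
      (ν.withDensity (h' ∘ restr d hs)).map (restr d hs)) :
    ∃ π', IsPartialCoupling μ ν hs h h' π' := by
  set r := restr d (Nat.le_of_succ_le hs) with hrdef
  set r' := restr d hs with hr'def
  set q := restr d (Nat.le_succ s) with hqdef
  have hr : Measurable r := measurable_restr d _
  have hr' : Measurable r' := measurable_restr d _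
  have hq : Measurable q := measurable_restr d _
  have hl := H.measurable_left
  have hl' := H.measurable_right
  have h1 : ∀ y, h y ≤ 1 := fun y => (hle y).trans (H.left_le_one _)
  have h1' : ∀ y, h' y ≤ 1 := fun y => (hle' y).trans (H.right_le_one _)
  set M := μ.withDensity (fun x => l (q (r' x)) - h (r' x)) with hM
  set N := ν.withDensity (fun x => l' (q (r' x)) - h' (r' x)) with hN
  have eM : M + μ.withDensity (h ∘ r') = μ.withDensity (l ∘ r) :=
    withDensity_tsub_add μ hr' (l := l ∘ q) hh hle
  have eN : N + ν.withDensity (h' ∘ r') = ν.withDensity (l' ∘ r) :=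
    withDensity_tsub_add ν hr' (l := l' ∘ q) hh' hle'
  have : IsFiniteMeasure M := isFiniteMeasure_withDensity_of_le_one μ fun x =>
    tsub_le_self.trans (H.left_le_one _)
  have : IsFiniteMeasure N := isFiniteMeasure_withDensity_of_le_one ν fun x =>
    tsub_le_self.trans (H.right_le_one _)
  have : IsFiniteMeasure (μ.withDensity (h ∘ r')) :=
    isFiniteMeasure_withDensity_of_le_one μ fun x => h1 _
  have hmap' : (μ.withDensity (h ∘ r')).map r = (ν.withDensity (h' ∘ r')).map r := by
    have := congrArg (Measure.map q) hmap
    rwa [Measure.map_map hq hr', Measure.map_map hq hr'] at this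
  have eMN : M.map r = N.map r := by
    refine add_right_cancel_of_isFiniteMeasure (ρ := (μ.withDensity (h ∘ r')).map r) ?_
    rw [← Measure.map_add _ _ hr, eM]
    rw [hmap', ← Measure.map_add _ _ hr, eN]
    exact H.map_eq
  obtain ⟨θ, hθ1, hθ2, hθe, hθl, hθr⟩ := exists_coupling_over M N hr eMN
  have hθswap : ∀ f : Traj d T × Traj d T → ℝ≥0∞, Measurable f →
      ∫⁻ q, f q ∂(θ.map Prod.swap) = ∫⁻ q, f q.swap ∂θ :=
    fun f hf => lintegral_map hf measurable_swap
  have hθc : ∀ t (ht : t ≤ T), s + 1 ≤ t →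
      CausalAt (restr d ht) μ θ ∧ CausalAt (restr d ht) ν (θ.map Prod.swap) := by
    intro t ht hst
    have hb := measurable_restr d hst
    have ha := measurable_restr d (Nat.le_of_succ_le hst)
    constructor
    · exact CausalAt.of_coarser (measurable_restr d ht) ha hb
        (f := fun y => l (q y) - h y) (by fun_prop) hθl
    · refine CausalAt.of_coarser (measurable_restr d ht) ha hb
        (f := fun y => l' (q y) - h' y) (by fun_prop) fun v hv => ?_
      obtain ⟨g, hg, e⟩ := hθr v hv
      refine ⟨g, hg, fun u hu => ?_⟩
      rw [hθswap _ (by fun_prop)]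
      exact e u hu
  refine ⟨π + θ, hh, hh', h1, h1', hmap, ?_, ?_, ?_, ?_⟩
  · rw [Measure.map_add _ _ measurable_fst, hθ1, add_assoc, eM]
    exact H.fst_add
  · rw [Measure.map_add _ _ measurable_snd, hθ2, add_assoc, eN]
    exact H.snd_add
  · intro t ht hst
    have hc := H.causal_of_le t ht (Nat.le_of_succ_le hst)
    rw [Measure.map_add _ _ measurable_swap]
    exact ⟨hc.1.add (measurable_restr d ht) (hθc t ht hst).1,
      hc.2.add (measurable_restr d ht) (hθc t ht hst).2⟩
  · intro t ht hts ζ hζ1 hζ2 hζe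
    have e1 : (θ + ζ).map Prod.fst = μ.withDensity (l ∘ r) := by
      rw [Measure.map_add _ _ measurable_fst, hθ1, hζ1, eM]
    have e2 : (θ + ζ).map Prod.snd = ν.withDensity (l' ∘ r) := by
      rw [Measure.map_add _ _ measurable_snd, hθ2, hζ2, eN]
    have e3 : ∀ᵐ z ∂(θ + ζ), r z.1 = r z.2 := by
      rw [ae_add_measure_iff]
      refine ⟨hθe, ?_⟩
      filter_upwards [hζe] with z hz
      exact congrArg q hz
    rw [add_assoc]
    rcases Nat.lt_succ_iff_lt_or_eq.mp hts with hlt | rfl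
    · exact H.causal_add_of_lt t ht hlt _ e1 e2 e3
    · have hc := H.causal_of_le t ht le_rfl
      rw [Measure.map_add _ _ measurable_swap]
      refine ⟨hc.1.add hr (CausalAt.of_ae_eq hr hl e1 e3), hc.2.add hr
        (CausalAt.of_ae_eq hr hl' ((map_fst_map_swap _).trans e2) ?_)⟩
      rw [ae_map_iff measurable_swap.aemeasurable
        (measurableSet_eq_fun (by fun_prop) (by fun_prop))]
      filter_upwards [e3] with z hz
      exact hz.symm

lemma exists_isPartialCoupling {d T : ℕ} {μ ν m μ' ν' : Measure (Traj d T)}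
    [IsProbabilityMeasure μ] [IsProbabilityMeasure ν] (hμ : μ = m + μ') (hν : ν = m + ν')
    {δ : ℝ≥0∞} (hδ : μ' Set.univ ≤ δ) (hδ' : ν' Set.univ ≤ δ) (s : ℕ) (hs : s ≤ T) :
    ∃ l l' π, IsPartialCoupling μ ν hs l l' π ∧
      1 ≤ ∫⁻ x, l (restr d hs x) ∂μ + ((2 * s - 1 : ℕ) : ℝ≥0∞) * δ := by
  have : IsFiniteMeasure m :=
    isFiniteMeasure_of_le μ (hμ ▸ Measure.le_add_right le_rfl)
  have step : ∀ {s : ℕ} (hs : s + 1 ≤ T) {l l' : Traj d s → ℝ≥0∞} {π} {ε : ℝ≥0∞},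
      IsPartialCoupling μ ν (Nat.le_of_succ_le hs) l l' π →
      ∫⁻ x, (l (restr d (Nat.le_of_succ_le hs) x) - l' (restr d (Nat.le_of_succ_le hs) x)) ∂m ≤ ε →
      ∃ h h' π', IsPartialCoupling μ ν hs h h' π' ∧
        ∫⁻ x, l (restr d (Nat.le_of_succ_le hs) x) ∂μ ≤
          ∫⁻ x, h (restr d hs x) ∂μ + (ε + δ) := by
    intro s hs l l' π ε H hε
    have hq := measurable_restr d (Nat.le_succ s)
    obtain ⟨h, h', hh, hh', hle, hle', hmap, hmass⟩ := exists_density_refinement hμ hν hδ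
      (measurable_restr d hs) (l := l ∘ restr d (Nat.le_succ s))
      (l' := l' ∘ restr d (Nat.le_succ s)) (H.measurable_left.comp hq)
      (H.measurable_right.comp hq) (fun y => H.left_le_one _) (fun y => H.right_le_one _) hε
    obtain ⟨π', H'⟩ := H.exists_succ hh hh' hle hle' hmap
    exact ⟨h, h', π', H', hmass⟩
  induction s with
  | zero => exact ⟨_, _, _, isPartialCoupling_zero μ ν, by simp⟩
  | succ s ih =>
    rcases Nat.eq_zero_or_pos s with rfl | hpos
    · obtain ⟨h, h', π', H', hmass⟩ := step hs (isPartialCoupling_zero μ ν) (ε := 0) (by simp)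
      exact ⟨h, h', π', H', by simpa using hmass⟩
    · obtain ⟨l, l', π, H, hl⟩ := ih (Nat.le_of_succ_le hs)
      obtain ⟨h, h', π', H', hmass⟩ := step hs H (ε := δ)
        (lintegral_tsub_le hμ hν hδ' (measurable_restr d _) H.measurable_left H.measurable_right
          H.right_le_one H.map_eq)
      refine ⟨h, h', π', H', ?_⟩
      have hnat : 2 * (s + 1) - 1 = 2 + (2 * s - 1) := by omega
      calc (1 : ℝ≥0∞) ≤ _ := hl
        _ ≤ _ := add_le_add_left hmass _
        _ = _ := by rw [hnat, Nat.cast_add]; rw [Nat.cast_ofNat]; ring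

lemma exists_mem_BCpl_measure_ne_le {d T : ℕ} {μ ν : Measure (Traj d T)}
    [IsProbabilityMeasure μ] [IsProbabilityMeasure ν] {γ : Measure (Traj d T × Traj d T)}
    (hγ : γ ∈ Cpl μ ν) :
    ∃ π ∈ BCpl μ ν, π {q | q.1 ≠ q.2} ≤ ((2 * T - 1 : ℕ) : ℝ≥0∞) * γ {q | q.1 ≠ q.2} := by
  obtain ⟨-, hγ1, hγ2⟩ := hγ
  set S : Set (Traj d T × Traj d T) := {q | q.1 ≠ q.2} with hSdef
  have hS : MeasurableSet S := (measurableSet_eq_fun measurable_fst measurable_snd).compl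
  have hsplit : ∀ {f : Traj d T × Traj d T → Traj d T}, Measurable f →
      γ.map f = (γ.restrict Sᶜ).map f + (γ.restrict S).map f := by
    intro f hf
    rw [← Measure.map_add _ _ hf, add_comm, Measure.restrict_add_restrict_compl hS]
  have hdiag : (γ.restrict Sᶜ).map Prod.snd = (γ.restrict Sᶜ).map Prod.fst := by
    refine Measure.map_congr ?_
    filter_upwards [ae_restrict_mem hS.compl] with q hq
    exact (not_not.mp hq).symm
  have hμ := hγ1.symm.trans (hsplit measurable_fst)
  have hν := hγ2.symm.trans (hsplit measurable_snd)
  rw [hdiag] at hν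
  obtain ⟨l, l', π, H, hmass⟩ := exists_isPartialCoupling hμ hν (δ := γ S)
    (by simp [Measure.map_apply measurable_fst]) (by simp [Measure.map_apply measurable_snd])
    T le_rfl
  have hid : restr d (le_refl T) = id := rfl
  set α := μ.withDensity (l ∘ restr d (le_refl T)) with hα
  have hαβ : ν.withDensity (l' ∘ restr d (le_refl T)) = α := by
    have := H.map_eq
    rw [hid, Measure.map_id, Measure.map_id] at this
    exact this.symm
  have hdm : Measurable fun x : Traj d T => (x, x) := by fun_prop
  set ζ : Measure (Traj d T × Traj d T) := α.map fun x => (x, x) with hζ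
  have hζ1 : ζ.map Prod.fst = α := by
    rw [hζ, Measure.map_map measurable_fst hdm]; exact Measure.map_id
  have hζ2 : ζ.map Prod.snd = α := by
    rw [hζ, Measure.map_map measurable_snd hdm]; exact Measure.map_id
  have hζe : ∀ᵐ q ∂ζ, restr d (le_refl T) q.1 = restr d (le_refl T) q.2 := by
    rw [hζ, hid, ae_map_iff hdm.aemeasurable
      (measurableSet_eq_fun (by fun_prop) (by fun_prop))]
    simp
  have hf : (π + ζ).map Prod.fst = μ := by
    rw [Measure.map_add _ _ measurable_fst, hζ1]; exact H.fst_add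
  have hsn : (π + ζ).map Prod.snd = ν := by
    rw [Measure.map_add _ _ measurable_snd, hζ2, ← hαβ]; exact H.snd_add
  have hprob : IsProbabilityMeasure (π + ζ) := by
    constructor
    rw [← Set.preimage_univ (f := Prod.fst), ← Measure.map_apply measurable_fst .univ, hf,
      measure_univ]
  refine ⟨π + ζ, ⟨⟨hprob, hf, hsn⟩, inferInstance, fun t _ ht => ?_⟩, ?_⟩
  · have hr := measurable_restr d (Nat.le_of_succ_le ht)
    obtain ⟨c1, c2⟩ := H.causal_add_of_lt t (Nat.le_of_succ_le ht) ht ζ hζ1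
      (hζ2.trans hαβ.symm) hζe
    constructor
    · refine condIndep_of_forall_lintegral measurable_fst measurable_snd hr rfl _ fun v hv => ?_
      obtain ⟨g, hg, e⟩ := c1 v hv
      refine ⟨g, hg, fun u hu => (e u hu).trans ?_⟩
      conv_lhs => rw [← hf]
      exact lintegral_map (by fun_prop) measurable_fst
    · refine condIndep_of_forall_lintegral measurable_snd measurable_fst hr rfl _ fun v hv => ?_
      obtain ⟨g, hg, e⟩ := c2 v hv
      refine ⟨g, hg, fun u hu => Eq.trans ?_ ((e u hu).trans ?_)⟩
      · exact (lintegral_map (f := fun q => u q.1 * v (restr d (Nat.le_of_succ_le ht) q.2))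
          (by fun_prop) measurable_swap).symm
      · conv_lhs => rw [← hsn]
        exact lintegral_map (by fun_prop) measurable_snd
  · have hαfin : IsFiniteMeasure α := isFiniteMeasure_withDensity_of_le_one μ fun x =>
      H.left_le_one _
    have hζ0 : ζ S = 0 := by
      have := ae_iff.mp hζe
      exact this
    have hπ1 : π Set.univ + α Set.univ = 1 := by
      have := congrArg (fun ρ : Measure (Traj d T) => ρ Set.univ) H.fst_add
      simpa only [Measure.add_apply, Measure.map_apply measurable_fst .univ, Set.preimage_univ,
        measure_univ] using this
    have hα1 : α Set.univ = ∫⁻ x, l (restr d (le_refl T) x) ∂μ := by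
      rw [hα, withDensity_apply _ .univ, Measure.restrict_univ]; rfl
    rw [← hα1, ← hπ1, add_comm] at hmass
    rw [Measure.add_apply, hζ0, add_zero]
    exact (measure_mono (Set.subset_univ S)).trans
      ((ENNReal.add_le_add_iff_left (measure_ne_top α _)).mp hmass)

lemma setLIntegral_ne_ofReal_one {d T : ℕ} (π : Measure (Traj d T × Traj d T)) :
    ∫⁻ q in {q : Traj d T × Traj d T | q.1 ≠ q.2},
      (ENNReal.ofReal ((fun _ => (1 : ℝ)) q.1) + ENNReal.ofReal ((fun _ => (1 : ℝ)) q.2)) ∂π =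
      2 * π {q | q.1 ≠ q.2} := by
  simp only [ENNReal.ofReal_one, one_add_one_eq_two, setLIntegral_const]

lemma Cpl_nonempty {α : Type*} [MeasurableSpace α] (μ ν : Measure α) [IsProbabilityMeasure μ]
    [IsProbabilityMeasure ν] : (Cpl μ ν).Nonempty :=
  ⟨μ.prod ν, inferInstance, by simp, by simp⟩

/-- The adapted total variation is at most `2T - 1` times the total variation. -/
lemma ATVw_one_le {d T : ℕ} (hT : 1 ≤ T) (μ ν : Measure (Traj d T)) [IsProbabilityMeasure μ]
    [IsProbabilityMeasure ν] :
    ATVw (fun _ => (1 : ℝ)) μ ν ≤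
      ((2 * T - 1 : ℕ) : ℝ≥0∞) * TVw (fun _ => (1 : ℝ)) μ ν := by
  have hne : ((2 * T - 1 : ℕ) : ℝ≥0∞) ≠ 0 := by
    rw [Nat.cast_ne_zero]; omega
  simp only [TVw, setLIntegral_ne_ofReal_one,
    ENNReal.mul_iInf_of_ne hne (ENNReal.natCast_ne_top _)]
  refine le_iInf₂ fun γ hγ => ?_
  obtain ⟨π, hπ, hle⟩ := exists_mem_BCpl_measure_ne_le hγ
  refine (iInf₂_le π hπ).trans ?_
  rw [setLIntegral_ne_ofReal_one, mul_left_comm]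
  gcongr

lemma lintegral_cost_le {d T : ℕ} {p : ℝ} (hp : 1 ≤ p) {𝒦 : Set (Traj d T)} {D : ℝ}
    (hdiam : ∀ x ∈ 𝒦, ∀ y ∈ 𝒦, (∑ i, ∑ j, |x i j - y i j| ^ p) ^ (1 / p) ≤ D)
    {μ ν : Measure (Traj d T)} (hμK : μ 𝒦ᶜ = 0) (hνK : ν 𝒦ᶜ = 0)
    {π : Measure (Traj d T × Traj d T)} (hπ : π ∈ Cpl μ ν) :
    ∫⁻ q, ENNReal.ofReal (∑ i, ∑ j, |q.1 i j - q.2 i j| ^ p) ∂π ≤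
      ENNReal.ofReal (D ^ p) * π {q | q.1 ≠ q.2} := by
  obtain ⟨-, h1, h2⟩ := hπ
  have hp0 : 0 < p := by linarith
  have hS : MeasurableSet {q : Traj d T × Traj d T | q.1 ≠ q.2} :=
    (measurableSet_eq_fun measurable_fst measurable_snd).compl
  have k1 : ∀ᵐ q ∂π, q.1 ∈ 𝒦 :=
    ae_of_ae_map measurable_fst.aemeasurable (p := fun x => x ∈ 𝒦) (h1 ▸ hμK)
  have k2 : ∀ᵐ q ∂π, q.2 ∈ 𝒦 :=
    ae_of_ae_map measurable_snd.aemeasurable (p := fun x => x ∈ 𝒦) (h2 ▸ hνK)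
  rw [← lintegral_indicator_const hS]
  refine lintegral_mono_ae ?_
  filter_upwards [k1, k2] with q hq1 hq2
  by_cases hq : q.1 = q.2
  · simp [hq, Real.zero_rpow hp0.ne']
  · rw [Set.indicator_of_mem (by exact hq)]
    refine ENNReal.ofReal_le_ofReal ?_
    have hnn : 0 ≤ ∑ i, ∑ j, |q.1 i j - q.2 i j| ^ p :=
      Finset.sum_nonneg fun i _ => Finset.sum_nonneg fun j _ => by positivity
    have := Real.rpow_le_rpow (Real.rpow_nonneg hnn _) (hdiam _ hq1 _ hq2) hp0.le
    rwa [← Real.rpow_mul hnn, one_div_mul_cancel hp0.ne', Real.rpow_one] at this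

/-- For measures concentrated on a set of finite `p`-diameter `D`,
`AW_p^p(μ,ν) ≤ D^p ATV(μ,ν) ≤ (2T-1) D^p TV(μ,ν)`. -/
theorem aw_le_diam_atv (d T : ℕ) (hd : 1 ≤ d) (hT : 1 ≤ T) (p : ℝ) (hp : 1 ≤ p)
    (𝒦 : Set (Traj d T)) (D : ℝ) (hD0 : 0 ≤ D)
    (hdiam : ∀ x ∈ 𝒦, ∀ y ∈ 𝒦, (∑ i, ∑ j, |x i j - y i j| ^ p) ^ (1 / p) ≤ D)
    (μ ν : Measure (Traj d T)) [IsProbabilityMeasure μ] [IsProbabilityMeasure ν]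
    (hμK : μ 𝒦ᶜ = 0) (hνK : ν 𝒦ᶜ = 0) :
    AWpow p μ ν ≤ ENNReal.ofReal (D ^ p) * ATVw (fun _ => (1 : ℝ)) μ ν ∧
    ENNReal.ofReal (D ^ p) * ATVw (fun _ => (1 : ℝ)) μ ν ≤
      ((2 * T - 1 : ℕ) : ℝ≥0∞) * (ENNReal.ofReal (D ^ p) * TVw (fun _ => (1 : ℝ)) μ ν) := by
  refine ⟨?_, ?_⟩
  · obtain ⟨γ, hγ⟩ := Cpl_nonempty μ ν
    obtain ⟨π₀, hπ₀, -⟩ := exists_mem_BCpl_measure_ne_le hγ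
    have : Nonempty (BCpl μ ν) := ⟨⟨π₀, hπ₀⟩⟩
    simp only [ATVw, AWpow, setLIntegral_ne_ofReal_one, iInf_subtype']
    rw [ENNReal.mul_iInf fun h => absurd h ENNReal.ofReal_ne_top]
    refine iInf_mono fun π => (lintegral_cost_le hp hdiam hμK hνK π.2.1).trans ?_
    gcongr
    exact le_mul_of_one_le_left' one_le_two
  · rw [mul_left_comm]
    gcongr
    exact ATVw_one_le hT μ ν

end
end

section
/- For every constant C > 0 there exist Borel probability measures μ, ν on ℝ² (i.e., d = 1 and T = 2) with ∫ (|x_1| + |x_2|) dμ(x) ≤ 2 and ∫ (|x_1| + |x_2|) dν(x) ≤ 2, such that TV₁(μ, ν) > 0 and ATV₁(μ, ν) > C · TV₁(μ, ν). Consequently, there is no finite constant C such that ATV₁(μ, ν) ≤ C · TV₁(μ, ν) holds for all probability measures μ, ν on ℝ² with finite first moments. -/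
open MeasureTheory ProbabilityTheory
open scoped ENNReal

noncomputable section

/-- Conditional independence given `f` implies independence on each fibre of `f`. -/
lemma measureReal_inter_mul_of_condIndep_comap {Ω β : Type*} {mΩ : MeasurableSpace Ω}
    [StandardBorelSpace Ω] [MeasurableSpace β] [MeasurableSingletonClass β] {P : Measure Ω}
    [IsFiniteMeasure P] {f : Ω → β} {m₁ m₂ : MeasurableSpace Ω}
    (hf : MeasurableSpace.comap f inferInstance ≤ mΩ) (h₁ : m₁ ≤ mΩ) (h₂ : m₂ ≤ mΩ)
    (h : CondIndep (MeasurableSpace.comap f inferInstance) m₁ m₂ hf P)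
    {s t : Set Ω} (hs : MeasurableSet[m₁] s) (ht : MeasurableSet[m₂] t) (y : β) :
    P.real (s ∩ t ∩ f ⁻¹' {y}) * P.real (f ⁻¹' {y}) =
      P.real (s ∩ f ⁻¹' {y}) * P.real (t ∩ f ⁻¹' {y}) := by
  have hA : MeasurableSet[MeasurableSpace.comap f inferInstance] (f ⁻¹' {y}) :=
    ⟨{y}, measurableSet_singleton y, rfl⟩
  rcases eq_or_ne (P (f ⁻¹' {y})) 0 with h0 | h0
  · have hz : ∀ u : Set Ω, P.real (u ∩ f ⁻¹' {y}) = 0 := fun u => by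
      rw [measureReal_def, measure_mono_null Set.inter_subset_right h0, ENNReal.toReal_zero]
    simp [hz]
  have hfactor : ∀ u : Set Ω, MeasurableSet[mΩ] u → ∃ c : ℝ,
      (∀ ω ∈ f ⁻¹' {y}, (P⟦u | MeasurableSpace.comap f inferInstance⟧) ω = c) ∧
      P.real (u ∩ f ⁻¹' {y}) = P.real (f ⁻¹' {y}) * c := by
    intro u hu
    obtain ⟨g, -, hg⟩ := (stronglyMeasurable_condExp (μ := P)
      (f := u.indicator fun _ => (1 : ℝ))
      (m := MeasurableSpace.comap f inferInstance)).exists_eq_measurable_comp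
    have hc : ∀ ω ∈ f ⁻¹' {y},
        (P⟦u | MeasurableSpace.comap f inferInstance⟧) ω = g y := by
      intro ω hω
      rw [hg, Function.comp_apply, show f ω = y from hω]
    refine ⟨g y, hc, ?_⟩
    have hint := setIntegral_condExp hf
      ((integrable_const (1 : ℝ)).indicator hu : Integrable _ P) hA
    rw [setIntegral_congr_fun (hf _ hA) hc, setIntegral_const,
      integral_indicator_const _ hu, measureReal_restrict_apply hu] at hint
    simpa using hint.symm
  have hprod := (condIndep_iff _ m₁ m₂ hf h₁ h₂ P).1 h s t hs ht
  obtain ⟨a, ha, ha'⟩ := hfactor s (h₁ _ hs)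
  obtain ⟨b, hb, hb'⟩ := hfactor t (h₂ _ ht)
  obtain ⟨c, hc, hc'⟩ := hfactor (s ∩ t) ((h₁ _ hs).inter (h₂ _ ht))
  obtain ⟨ω, hω, hωA⟩ : ∃ ω, (P⟦s ∩ t | MeasurableSpace.comap f inferInstance⟧) ω =
      ((P⟦s | MeasurableSpace.comap f inferInstance⟧) *
        (P⟦t | MeasurableSpace.comap f inferInstance⟧)) ω ∧ ω ∈ f ⁻¹' {y} := by
    have hfreq : ∃ᵐ ω ∂P, ω ∈ f ⁻¹' {y} := frequently_ae_mem_iff.2 h0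
    obtain ⟨ω, hω⟩ := (hfreq.and_eventually hprod).exists
    exact ⟨ω, hω.2, hω.1⟩
  rw [Pi.mul_apply, ha ω hωA, hb ω hωA, hc ω hωA] at hω
  rw [ha', hb', hc', hω]
  ring

/-- The two-step real path `(a, b)`. -/
def twoStep (a b : ℝ) : Traj 1 2 := ![fun _ => a, fun _ => b]

@[simp] lemma twoStep_zero (a b : ℝ) (j : Fin 1) : twoStep a b 0 j = a := rfl

@[simp] lemma twoStep_one (a b : ℝ) (j : Fin 1) : twoStep a b 1 j = b := rfl

/-- The law with a rare first step `1`, after which the path usually returns to `0` but jumps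
to `K ^ 2` with conditional probability `K⁻¹`. -/
def spikeLaw (K : ℝ) : Measure (Traj 1 2) :=
  ENNReal.ofReal (1 - K⁻¹) • Measure.dirac (twoStep 0 0) +
  ENNReal.ofReal (K⁻¹ - (K ^ 2)⁻¹) • Measure.dirac (twoStep 1 0) +
  ENNReal.ofReal (K ^ 2)⁻¹ • Measure.dirac (twoStep 1 (K ^ 2))

/-- The law obtained from `spikeLaw` by moving the mass at `(1, 0)` to `(0, 0)`. -/
def announcedSpikeLaw (K : ℝ) : Measure (Traj 1 2) :=
  ENNReal.ofReal (1 - K⁻¹) • Measure.dirac (twoStep 0 0) +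
  ENNReal.ofReal (K⁻¹ - (K ^ 2)⁻¹) • Measure.dirac (twoStep 0 0) +
  ENNReal.ofReal (K ^ 2)⁻¹ • Measure.dirac (twoStep 1 (K ^ 2))

/-- The coupling of `spikeLaw` and `announcedSpikeLaw` that leaves all common mass in place. -/
def spikeCoupling (K : ℝ) : Measure (Traj 1 2 × Traj 1 2) :=
  ENNReal.ofReal (1 - K⁻¹) • Measure.dirac (twoStep 0 0, twoStep 0 0) +
  ENNReal.ofReal (K⁻¹ - (K ^ 2)⁻¹) • Measure.dirac (twoStep 1 0, twoStep 0 0) +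
  ENNReal.ofReal (K ^ 2)⁻¹ • Measure.dirac (twoStep 1 (K ^ 2), twoStep 1 (K ^ 2))

section Spike

variable {K : ℝ}

lemma inv_sq_lt_inv (hK : 1 < K) : (K ^ 2)⁻¹ < K⁻¹ :=
  inv_strictAnti₀ (by positivity) (by nlinarith)

lemma ofReal_spike_weights_sum (hK : 1 < K) :
    ENNReal.ofReal (1 - K⁻¹) + ENNReal.ofReal (K⁻¹ - (K ^ 2)⁻¹) + ENNReal.ofReal (K ^ 2)⁻¹ = 1 := by
  have h₁ := inv_sq_lt_inv hK
  have h₂ := inv_lt_one_of_one_lt₀ hK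
  rw [← ENNReal.ofReal_add (by linarith) (by linarith),
    ← ENNReal.ofReal_add (by linarith) (by positivity)]
  simp

lemma isProbabilityMeasure_spikeLaw (hK : 1 < K) : IsProbabilityMeasure (spikeLaw K) :=
  ⟨by simpa [spikeLaw] using ofReal_spike_weights_sum hK⟩

lemma isProbabilityMeasure_announcedSpikeLaw (hK : 1 < K) :
    IsProbabilityMeasure (announcedSpikeLaw K) :=
  ⟨by simpa [announcedSpikeLaw] using ofReal_spike_weights_sum hK⟩

lemma spikeCoupling_mem_cpl (hK : 1 < K) :
    spikeCoupling K ∈ Cpl (spikeLaw K) (announcedSpikeLaw K) := by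
  refine ⟨⟨by simpa [spikeCoupling] using ofReal_spike_weights_sum hK⟩, ?_, ?_⟩
  · simp [spikeCoupling, spikeLaw, Measure.map_add, Measure.map_smul,
      measurable_fst]
  · simp [spikeCoupling, announcedSpikeLaw, Measure.map_add, Measure.map_smul,
      measurable_snd]

lemma lintegral_abs_spikeLaw_le (hK : 1 < K) :
    ∫⁻ x, ENNReal.ofReal (∑ i, ∑ j, |x i j|) ∂(spikeLaw K) ≤ 2 := by
  have h₁ := inv_sq_lt_inv hK
  have h₂ := inv_lt_one_of_one_lt₀ hK
  have h₃ : (K ^ 2)⁻¹ * K ^ 2 = 1 := inv_mul_cancel₀ (by positivity)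
  have h₄ : (0 : ℝ) < (K ^ 2)⁻¹ := by positivity
  simp only [spikeLaw, lintegral_add_measure, lintegral_smul_measure, lintegral_dirac,
    Fin.sum_univ_two, twoStep_zero, twoStep_one, Fin.sum_const, smul_eq_mul]
  rw [← ENNReal.ofReal_mul (by linarith), ← ENNReal.ofReal_mul (by linarith),
    ← ENNReal.ofReal_mul (by positivity), ← ENNReal.ofReal_add (by simp) (by simp; linarith),
    ← ENNReal.ofReal_add (by simp; linarith) (by positivity)]
  refine ENNReal.ofReal_le_of_le_toReal ?_
  simp
  nlinarith

lemma lintegral_abs_announcedSpikeLaw_le (hK : 1 < K) :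
    ∫⁻ x, ENNReal.ofReal (∑ i, ∑ j, |x i j|) ∂(announcedSpikeLaw K) ≤ 2 := by
  have h₁ := inv_sq_lt_inv hK
  have h₂ := inv_lt_one_of_one_lt₀ hK
  have h₃ : (K ^ 2)⁻¹ * K ^ 2 = 1 := inv_mul_cancel₀ (by positivity)
  simp only [announcedSpikeLaw, lintegral_add_measure, lintegral_smul_measure, lintegral_dirac,
    Fin.sum_univ_two, twoStep_zero, twoStep_one, Fin.sum_const, smul_eq_mul]
  rw [← ENNReal.ofReal_mul (p := (K ^ 2)⁻¹) (by positivity)]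
  simp only [abs_zero, smul_zero, add_zero, ENNReal.ofReal_zero, mul_zero, zero_add]
  refine ENNReal.ofReal_le_of_le_toReal ?_
  simp
  nlinarith

lemma tvw_spikeLaw_le (hK : 1 < K) :
    TVw (wp 1) (spikeLaw K) (announcedSpikeLaw K) ≤
      ENNReal.ofReal ((K⁻¹ - (K ^ 2)⁻¹) * 3) := by
  have h₁ := inv_sq_lt_inv hK
  refine (iInf₂_le _ (spikeCoupling_mem_cpl hK)).trans (le_of_eq ?_)
  have hne : twoStep 1 0 ≠ twoStep 0 0 := fun h => by
    simpa using congrFun (congrFun h 0) 0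
  have hm : MeasurableSet {q : Traj 1 2 × Traj 1 2 | q.1 ≠ q.2} :=
    (measurableSet_eq_fun measurable_fst measurable_snd).compl
  rw [← lintegral_indicator hm]
  simp only [spikeCoupling, lintegral_add_measure, lintegral_smul_measure, lintegral_dirac]
  simp only [Set.indicator, Set.mem_ofPred_eq, ne_eq, not_true_eq_false, if_false, hne,
    not_false_eq_true, if_true, smul_eq_mul, mul_zero, zero_add, add_zero, wp]
  rw [← ENNReal.ofReal_add (by positivity) (by positivity), ← ENNReal.ofReal_mul (by linarith)]
  congr 2
  simp
  norm_num

lemma measurableSet_zero_eq_one : MeasurableSet {x : Traj 1 2 | x 0 0 = 1} :=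
  measurableSet_eq_fun (by fun_prop) measurable_const

lemma spikeLaw_zero_eq_one (hK : 1 < K) :
    spikeLaw K {x | x 0 0 = 1} = ENNReal.ofReal K⁻¹ := by
  have h₁ := inv_sq_lt_inv hK
  simp only [spikeLaw, Measure.add_apply, Measure.smul_apply, smul_eq_mul,
    Measure.dirac_apply' _ measurableSet_zero_eq_one, Set.indicator, Set.mem_ofPred_eq,
    twoStep_zero, zero_ne_one, if_true, if_false, Pi.one_apply, mul_one, mul_zero, zero_add]
  rw [← ENNReal.ofReal_add (by linarith) (by positivity), sub_add_cancel]

lemma announcedSpikeLaw_zero_eq_one :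
    announcedSpikeLaw K {x | x 0 0 = 1} = ENNReal.ofReal (K ^ 2)⁻¹ := by
  simp only [announcedSpikeLaw, Measure.add_apply, Measure.smul_apply, smul_eq_mul,
    Measure.dirac_apply' _ measurableSet_zero_eq_one, Set.indicator, Set.mem_ofPred_eq,
    twoStep_zero, zero_ne_one, if_true, if_false, Pi.one_apply, mul_one, mul_zero, zero_add]

lemma measureReal_fst_zero_eq_one (hK : 1 < K) {π : Measure (Traj 1 2 × Traj 1 2)}
    (hfst : π.map Prod.fst = spikeLaw K) : π.real {q | q.1 0 0 = 1} = K⁻¹ := by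
  rw [measureReal_def,
    show {q : Traj 1 2 × Traj 1 2 | q.1 0 0 = 1} = Prod.fst ⁻¹' {x | x 0 0 = 1} from rfl,
    ← Measure.map_apply measurable_fst measurableSet_zero_eq_one, hfst,
    spikeLaw_zero_eq_one hK, ENNReal.toReal_ofReal (by positivity)]

/-- Every coupling gives mass at least `K⁻¹ - (K ^ 2)⁻¹` to `X_1 = 1`, `Y_1 ≠ 1`. -/
lemma le_measureReal_of_mem_cpl (hK : 1 < K) {π : Measure (Traj 1 2 × Traj 1 2)}
    (hπ : π ∈ Cpl (spikeLaw K) (announcedSpikeLaw K)) :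
    K⁻¹ - (K ^ 2)⁻¹ ≤ π.real ({q | q.2 0 0 ≠ 1} ∩ {q | q.1 0 0 = 1}) := by
  obtain ⟨hp, hfst, hsnd⟩ := hπ
  have hX := measureReal_fst_zero_eq_one hK hfst
  have hY : π.real {q | q.2 0 0 = 1} = (K ^ 2)⁻¹ := by
    rw [measureReal_def,
      show {q : Traj 1 2 × Traj 1 2 | q.2 0 0 = 1} = Prod.snd ⁻¹' {x | x 0 0 = 1} from rfl,
      ← Measure.map_apply measurable_snd measurableSet_zero_eq_one, hsnd,
      announcedSpikeLaw_zero_eq_one, ENNReal.toReal_ofReal (by positivity)]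
  have hle : π.real {q | q.1 0 0 = 1} ≤
      π.real (({q | q.2 0 0 ≠ 1} ∩ {q | q.1 0 0 = 1}) ∪ {q | q.2 0 0 = 1}) :=
    measureReal_mono fun q hq => by
      by_cases h : q.2 0 0 = 1
      · exact Or.inr h
      · exact Or.inl ⟨h, hq⟩
  have := hle.trans (measureReal_union_le _ _)
  linarith

lemma one_le_wp (x : Traj 1 2) : 1 ≤ wp 1 x := by
  unfold wp
  have : 0 ≤ ∑ i, ∑ j, |x i j| ^ (1 : ℝ) := by positivity
  linarith

lemma tvw_spikeLaw_pos (hK : 1 < K) : 0 < TVw (wp 1) (spikeLaw K) (announcedSpikeLaw K) := by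
  have h₁ := inv_sq_lt_inv hK
  refine lt_of_lt_of_le (ENNReal.ofReal_pos.2 (sub_pos.2 h₁)) (le_iInf₂ fun π hπ => ?_)
  have hp := hπ.1
  calc ENNReal.ofReal (K⁻¹ - (K ^ 2)⁻¹)
      ≤ π ({q | q.2 0 0 ≠ 1} ∩ {q | q.1 0 0 = 1}) :=
        ENNReal.ofReal_le_of_le_toReal (le_measureReal_of_mem_cpl hK hπ)
    _ ≤ π {q | q.1 ≠ q.2} := measure_mono fun q hq h => hq.1 (h ▸ hq.2)
    _ = ∫⁻ _ in {q | q.1 ≠ q.2}, 1 ∂π := by simp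
    _ ≤ _ := lintegral_mono fun q =>
        (ENNReal.one_le_ofReal.2 (one_le_wp q.1)).trans le_self_add

/-- Under a bicausal coupling, the spike of `X` is independent of `Y_1` given `X_1 = 1`. -/
lemma le_measureReal_spike_of_mem_bcpl (hK : 1 < K) {π : Measure (Traj 1 2 × Traj 1 2)}
    (hπ : π ∈ BCpl (spikeLaw K) (announcedSpikeLaw K)) :
    (K⁻¹ - (K ^ 2)⁻¹) * K⁻¹ ≤
      π.real ({q | q.2 0 0 ≠ 1} ∩ {q | q.1 1 0 = K ^ 2} ∩ {q | q.1 0 0 = 1}) := by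
  obtain ⟨hc, _, hb⟩ := hπ
  have hle := le_measureReal_of_mem_cpl hK hc
  obtain ⟨-, hfst, -⟩ := hc
  have h2 : MeasurableSet {x : Traj 1 2 | x 1 0 = K ^ 2} :=
    measurableSet_eq_fun (by fun_prop) measurable_const
  have hA : {q : Traj 1 2 × Traj 1 2 | q.1 0 0 = 1} =
      (fun q => restr 1 (Nat.le_of_succ_le (le_refl 2)) q.1) ⁻¹' {fun _ _ => (1 : ℝ)} := by
    ext q
    simp only [Set.mem_ofPred_eq, Set.mem_preimage, Set.mem_singleton_iff]
    constructor
    · intro h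
      funext i j
      rw [Subsingleton.elim i 0, Subsingleton.elim j 0]
      exact h
    · intro h
      exact congrFun (congrFun h 0) 0
  have hs : MeasurableSet[sigmaY 1 2 (Nat.le_of_succ_le (le_refl 2))]
      {q : Traj 1 2 × Traj 1 2 | q.2 0 0 ≠ 1} :=
    ⟨{z : Traj 1 1 | z 0 0 = 1}ᶜ,
      (measurableSet_eq_fun (by fun_prop) measurable_const).compl, rfl⟩
  have ht : MeasurableSet[sigmaX 1 2 (le_refl 2)]
      {q : Traj 1 2 × Traj 1 2 | q.1 1 0 = K ^ 2} := ⟨_, h2, rfl⟩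
  have hind := measureReal_inter_mul_of_condIndep_comap _ (sigmaY_le 1 2 _) (sigmaX_le 1 2 _)
    (hb 1 le_rfl le_rfl).1 hs ht (fun _ _ => (1 : ℝ))
  rw [← hA] at hind
  have hX := measureReal_fst_zero_eq_one hK hfst
  have hXX : π.real ({q | q.1 1 0 = K ^ 2} ∩ {q | q.1 0 0 = 1}) = (K ^ 2)⁻¹ := by
    rw [measureReal_def,
      show {q : Traj 1 2 × Traj 1 2 | q.1 1 0 = K ^ 2} ∩ {q | q.1 0 0 = 1} =
        Prod.fst ⁻¹' ({x | x 1 0 = K ^ 2} ∩ {x | x 0 0 = 1}) from rfl,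
      ← Measure.map_apply measurable_fst (h2.inter measurableSet_zero_eq_one), hfst]
    have hK0 : (0 : ℝ) ≠ K ^ 2 := by positivity
    simp [spikeLaw, Measure.dirac_apply' _ (h2.inter measurableSet_zero_eq_one), hK0,
      sq_nonneg K]
  rw [hX, hXX] at hind
  have hKpos : 0 < K := by linarith
  have := mul_le_mul_of_nonneg_right hle (inv_nonneg.2 (sq_nonneg K))
  rw [← hind] at this
  refine le_of_mul_le_mul_right (le_trans (le_of_eq ?_) this) (inv_pos.2 hKpos)
  field_simp

lemma le_atvw_spikeLaw (hK : 1 < K) :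
    ENNReal.ofReal ((K⁻¹ - (K ^ 2)⁻¹) * K) ≤
      ATVw (wp 1) (spikeLaw K) (announcedSpikeLaw K) := by
  refine le_iInf₂ fun π hπ => ?_
  have hp := hπ.1.1
  set E : Set (Traj 1 2 × Traj 1 2) :=
    {q | q.2 0 0 ≠ 1} ∩ {q | q.1 1 0 = K ^ 2} ∩ {q | q.1 0 0 = 1}
  have hEm : MeasurableSet E :=
    ((measurableSet_eq_fun (by fun_prop) measurable_const).compl.inter
      (measurableSet_eq_fun (by fun_prop) measurable_const)).inter
      (measurableSet_eq_fun (by fun_prop) measurable_const)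
  calc ENNReal.ofReal ((K⁻¹ - (K ^ 2)⁻¹) * K)
      = ENNReal.ofReal (K ^ 2) * ENNReal.ofReal ((K⁻¹ - (K ^ 2)⁻¹) * K⁻¹) := by
        rw [← ENNReal.ofReal_mul (sq_nonneg K)]
        congr 1
        field_simp
    _ ≤ ENNReal.ofReal (K ^ 2) * π E := by
        gcongr
        exact ENNReal.ofReal_le_of_le_toReal (le_measureReal_spike_of_mem_bcpl hK hπ)
    _ = ∫⁻ _ in E, ENNReal.ofReal (K ^ 2) ∂π := by simp
    _ ≤ ∫⁻ q in E, (ENNReal.ofReal (wp 1 q.1) + ENNReal.ofReal (wp 1 q.2)) ∂π := by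
        refine setLIntegral_mono' hEm fun q hq => le_trans ?_ le_self_add
        refine ENNReal.ofReal_le_ofReal ?_
        have h1 : q.1 1 0 = K ^ 2 := hq.1.2
        have h0 := abs_nonneg (q.1 0 0)
        simp only [wp, Real.rpow_one, Fin.sum_univ_two, Finset.univ_unique, Fin.default_eq_zero,
          Finset.sum_singleton, h1, abs_of_nonneg (sq_nonneg K)]
        linarith
    _ ≤ _ := lintegral_mono_set fun q hq (h : q.1 = q.2) => hq.1.1 (h ▸ hq.2)

end Spike

/-- No constant `C` works in `ATV₁ ≤ C · TV₁` over measures on `ℝ²` with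
first moments bounded by `2`. -/
theorem atv1_tv1_no_uniform_constant (C : ℝ) (hC : 0 < C) :
    ∃ μ ν : Measure (Traj 1 2),
      IsProbabilityMeasure μ ∧ IsProbabilityMeasure ν ∧
      (∫⁻ x, ENNReal.ofReal (∑ i, ∑ j, |x i j|) ∂μ) ≤ 2 ∧
      (∫⁻ x, ENNReal.ofReal (∑ i, ∑ j, |x i j|) ∂ν) ≤ 2 ∧
      0 < TVw (wp 1) μ ν ∧
      ENNReal.ofReal C * TVw (wp 1) μ ν < ATVw (wp 1) μ ν := by
  have hK : 1 < 3 * C + 1 := by linarith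
  refine ⟨spikeLaw (3 * C + 1), announcedSpikeLaw (3 * C + 1), isProbabilityMeasure_spikeLaw hK,
    isProbabilityMeasure_announcedSpikeLaw hK, lintegral_abs_spikeLaw_le hK,
    lintegral_abs_announcedSpikeLaw_le hK, tvw_spikeLaw_pos hK, ?_⟩
  have hpos := sub_pos.2 (inv_sq_lt_inv hK)
  calc ENNReal.ofReal C * TVw (wp 1) (spikeLaw (3 * C + 1)) (announcedSpikeLaw (3 * C + 1))
      ≤ ENNReal.ofReal C *
          ENNReal.ofReal (((3 * C + 1)⁻¹ - ((3 * C + 1) ^ 2)⁻¹) * 3) := by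
        gcongr
        exact tvw_spikeLaw_le hK
    _ = ENNReal.ofReal (C * (((3 * C + 1)⁻¹ - ((3 * C + 1) ^ 2)⁻¹) * 3)) :=
        (ENNReal.ofReal_mul hC.le).symm
    _ < ENNReal.ofReal (((3 * C + 1)⁻¹ - ((3 * C + 1) ^ 2)⁻¹) * (3 * C + 1)) :=
        (ENNReal.ofReal_lt_ofReal_iff (by positivity)).2 (by nlinarith)
    _ ≤ _ := le_atvw_spikeLaw hK

end
end

section
/- Let μ, ν be Borel probability measures on ℝ^{dT} and let w : ℝ^{dT} → [0, ∞) be measurable with ∫ w dμ + ∫ w dν < ∞. Then TV_w(μ, ν) = ∫ w dμ + ∫ w dν − 2 ∫ w d(μ ⊓ ν), where μ ⊓ ν is the greatest lower bound of μ and ν in the lattice of finite Borel measures on ℝ^{dT} (ordered by setwise comparison). Equivalently, the supremum over all couplings π of ∫ 2 w(x) 1_{x = y} dπ(x, y) equals 2 ∫ w d(μ ⊓ ν). -/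
open MeasureTheory ProbabilityTheory
open scoped ENNReal

noncomputable section

section Coupling

variable {α : Type*} [MeasurableSpace α] {μ ν : Measure α}

/-- The common part `μ ⊓ ν` sits on the diagonal, the remainders are coupled independently. -/
def maximalCoupling (μ ν : Measure α) : Measure (α × α) :=
  (μ ⊓ ν).map (fun x => (x, x)) +
    ((μ - μ ⊓ ν) Set.univ)⁻¹ • (μ - μ ⊓ ν).prod (ν - μ ⊓ ν)

lemma maximalCoupling_mem_Cpl [IsProbabilityMeasure μ] [IsProbabilityMeasure ν] :
    maximalCoupling μ ν ∈ Cpl μ ν := by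
  have hm : IsFiniteMeasure (μ ⊓ ν) := isFiniteMeasure_of_le μ inf_le_left
  have hdiag : Measurable fun x : α => (x, x) := measurable_id.prodMk measurable_id
  have hmass : (μ - μ ⊓ ν) Set.univ = (ν - μ ⊓ ν) Set.univ := by
    rw [Measure.sub_apply .univ inf_le_left, Measure.sub_apply .univ inf_le_right]
    simp
  have hcancel (ρ : Measure α) (h : ρ Set.univ = (μ - μ ⊓ ν) Set.univ) :
      (((μ - μ ⊓ ν) Set.univ)⁻¹ * (μ - μ ⊓ ν) Set.univ) • ρ = ρ := by
    by_cases h0 : (μ - μ ⊓ ν) Set.univ = 0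
    · rw [h0, Measure.measure_univ_eq_zero] at h
      simp [h]
    · rw [ENNReal.inv_mul_cancel h0 (measure_ne_top _ _), one_smul]
  have hfst : (maximalCoupling μ ν).map Prod.fst = μ := by
    rw [maximalCoupling, Measure.map_add _ _ measurable_fst,
      Measure.map_map measurable_fst hdiag, Measure.map_smul, Measure.map_fst_prod, ← hmass,
      smul_smul, hcancel _ rfl]
    change (μ ⊓ ν).map id + _ = μ
    rw [Measure.map_id, add_comm, Measure.sub_add_cancel_of_le inf_le_left]
  have hsnd : (maximalCoupling μ ν).map Prod.snd = ν := by
    rw [maximalCoupling, Measure.map_add _ _ measurable_snd,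
      Measure.map_map measurable_snd hdiag, Measure.map_smul, Measure.map_snd_prod,
      smul_smul, hcancel _ hmass.symm]
    change (μ ⊓ ν).map id + _ = ν
    rw [Measure.map_id, add_comm, Measure.sub_add_cancel_of_le inf_le_right]
  refine ⟨⟨?_⟩, hfst, hsnd⟩
  rw [← Set.preimage_univ (f := Prod.fst), ← Measure.map_apply measurable_fst .univ, hfst,
    measure_univ]

variable [MeasurableEq α] {f : α → ℝ≥0∞}

lemma map_fst_restrict_diagonal_le_inf {π : Measure (α × α)} (hπ : π ∈ Cpl μ ν) :
    (π.restrict {q | q.1 = q.2}).map Prod.fst ≤ μ ⊓ ν := by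
  obtain ⟨-, rfl, rfl⟩ := hπ
  refine le_inf (Measure.map_mono Measure.restrict_le_self measurable_fst) ?_
  have heq : (Prod.fst : α × α → α) =ᵐ[π.restrict {q | q.1 = q.2}] Prod.snd :=
    ae_restrict_mem (measurableSet_eq_fun measurable_fst measurable_snd)
  rw [Measure.map_congr heq]
  exact Measure.map_mono Measure.restrict_le_self measurable_snd

lemma setLIntegral_diagonal_le (hf : Measurable f) {π : Measure (α × α)} (hπ : π ∈ Cpl μ ν) :
    ∫⁻ q in {q : α × α | q.1 = q.2}, 2 * f q.1 ∂π ≤ 2 * ∫⁻ x, f x ∂(μ ⊓ ν) := by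
  rw [lintegral_const_mul _ (by fun_prop), ← lintegral_map hf measurable_fst]
  gcongr
  exact map_fst_restrict_diagonal_le_inf hπ

lemma le_setLIntegral_diagonal_maximalCoupling (hf : Measurable f) :
    2 * ∫⁻ x, f x ∂(μ ⊓ ν) ≤
      ∫⁻ q in {q : α × α | q.1 = q.2}, 2 * f q.1 ∂(maximalCoupling μ ν) := by
  have hdiag : Measurable fun x : α => (x, x) := measurable_id.prodMk measurable_id
  have hle : (μ ⊓ ν).map (fun x => (x, x)) ≤ maximalCoupling μ ν := Measure.le_add_right le_rfl
  refine le_trans (le_of_eq ?_) (lintegral_mono' (Measure.restrict_mono le_rfl hle) le_rfl)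
  rw [Measure.restrict_map hdiag (measurableSet_eq_fun measurable_fst measurable_snd),
    lintegral_map (by fun_prop) hdiag, lintegral_const_mul _ hf]
  simp

lemma setLIntegral_offDiagonal_add_diagonal (hf : Measurable f) {π : Measure (α × α)}
    (hπ : π ∈ Cpl μ ν) :
    ∫⁻ q in {q : α × α | q.1 ≠ q.2}, (f q.1 + f q.2) ∂π +
      ∫⁻ q in {q : α × α | q.1 = q.2}, 2 * f q.1 ∂π = ∫⁻ x, f x ∂μ + ∫⁻ x, f x ∂ν := by
  obtain ⟨-, rfl, rfl⟩ := hπ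
  have hD : MeasurableSet {q : α × α | q.1 = q.2} :=
    measurableSet_eq_fun measurable_fst measurable_snd
  have hdiag : ∫⁻ q in {q : α × α | q.1 = q.2}, 2 * f q.1 ∂π =
      ∫⁻ q in {q : α × α | q.1 = q.2}, (f q.1 + f q.2) ∂π :=
    setLIntegral_congr_fun hD fun q hq => by
      rw [Set.mem_ofPred_eq] at hq
      simp only [← hq, two_mul]
  rw [hdiag, add_comm, lintegral_map hf measurable_fst, lintegral_map hf measurable_snd,
    ← lintegral_add_left (by fun_prop)]
  exact lintegral_add_compl _ hD

end Coupling

/-- Representation of the weighted total variation: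
`TV_w(μ,ν) = ∫ w dμ + ∫ w dν - 2∫ w d(μ ⊓ ν)`, and the supremum over couplings of
`∫ 2 w(x) 1_{x=y} dπ` equals `2 ∫ w d(μ ⊓ ν)`. -/
theorem tv_w_representation (d T : ℕ) (hd : 1 ≤ d) (hT : 1 ≤ T)
    (μ ν : Measure (Traj d T)) [IsProbabilityMeasure μ] [IsProbabilityMeasure ν]
    (w : Traj d T → ℝ) (hwm : Measurable w) (hw0 : ∀ x, 0 ≤ w x)
    (hwint : (∫⁻ x, ENNReal.ofReal (w x) ∂μ) + (∫⁻ x, ENNReal.ofReal (w x) ∂ν) < ⊤) :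
    TVw w μ ν =
      (∫⁻ x, ENNReal.ofReal (w x) ∂μ) + (∫⁻ x, ENNReal.ofReal (w x) ∂ν)
        - 2 * ∫⁻ x, ENNReal.ofReal (w x) ∂(μ ⊓ ν) ∧
    (⨆ π ∈ Cpl μ ν, ∫⁻ q in {q : Traj d T × Traj d T | q.1 = q.2},
        2 * ENNReal.ofReal (w q.1) ∂π)
      = 2 * ∫⁻ x, ENNReal.ofReal (w x) ∂(μ ⊓ ν) := by
  have hf : Measurable fun x => ENNReal.ofReal (w x) := hwm.ennreal_ofReal
  have hmem : maximalCoupling μ ν ∈ Cpl μ ν := maximalCoupling_mem_Cpl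
  have hge := le_setLIntegral_diagonal_maximalCoupling (μ := μ) (ν := ν) hf
  refine ⟨le_antisymm ?_ ?_, le_antisymm ?_ ?_⟩
  · have hsum := setLIntegral_offDiagonal_add_diagonal hf hmem
    refine (iInf₂_le _ hmem).trans (ENNReal.le_sub_of_add_le_right ?_ ?_)
    · refine ne_top_of_le_ne_top hwint.ne (hge.trans ?_)
      rw [← hsum]
      exact le_add_self
    · rw [← hsum]
      gcongr
  · refine le_iInf₂ fun π hπ => ?_
    rw [tsub_le_iff_right, ← setLIntegral_offDiagonal_add_diagonal hf hπ]
    gcongr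
    exact setLIntegral_diagonal_le hf hπ
  · exact iSup₂_le fun π hπ => setLIntegral_diagonal_le hf hπ
  · exact le_iSup₂_of_le _ hmem hge

end
end
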